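/- arXiv:2211.13537 — 7 statements merged into one kernel-verified Lean document; each statement's English description precedes it below -/
import Mathlib

section
/- Let β > 1 and let G be the induced subgraph on the largest connected component of the Erdős–Rényi graph on [N] with parameter β. Then the Cheeger constant satisfies Φ(G) = Ω_P(1/log^2 N): there exists c > 0 such that, with probability tending to 1 as N → ∞, Φ(G) ≥ c/log^2 N. -/
open scoped Classical
open Filter

noncomputable section

/-- Probability weight of a given simple graph on `[N]` when each edge `{i,j}` (`i ≠ j`)
is present independently with probability `p i j` (indices 1-based). -/
def graphWeight (p : ℕ → ℕ → ℝ) (N : ℕ) (G : SimpleGraph (Fin N)) : ℝ :=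
  ∏ i : Fin N, ∏ j : Fin N,
    if i < j then
      (if G.Adj i j then p ((i : ℕ) + 1) ((j : ℕ) + 1)
       else 1 - p ((i : ℕ) + 1) ((j : ℕ) + 1))
    else 1

/-- Probability that the random graph with independent edge probabilities `p` satisfies the
property `A`. -/
def graphProb (p : ℕ → ℕ → ℝ) (N : ℕ) (A : SimpleGraph (Fin N) → Prop) : ℝ :=
  ∑ G : SimpleGraph (Fin N), if A G then graphWeight p N G else 0

/-- Probability that the Erdős–Rényi graph on `[N]` with edge probability `β/N` satisfies the
property `A`. -/
def erProb (β : ℝ) (N : ℕ) (A : SimpleGraph (Fin N) → Prop) : ℝ :=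
  graphProb (fun _ _ => β / (N : ℝ)) N A

/-- `e(S : Sᶜ)`: the number of edges of `G` with one endpoint in `S` and one in `Sᶜ`. -/
def crossCount {V : Type*} [Fintype V] [DecidableEq V] (G : SimpleGraph V)
    (S : Finset V) : ℕ :=
  ∑ i ∈ S, ∑ j ∈ Sᶜ, if G.Adj i j then 1 else 0

/-- The Cheeger constant `Φ(G) = min {e(S:Sᶜ)/|S| : ∅ ≠ S, |S| ≤ |V|/2}`. -/
def cheegerConst {V : Type*} [Fintype V] [DecidableEq V] (G : SimpleGraph V) : ℝ :=
  sInf {r : ℝ | ∃ S : Finset V, S.Nonempty ∧ 2 * S.card ≤ Fintype.card V ∧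
    r = (crossCount G S : ℝ) / (S.card : ℝ)}

/-- Number of vertices of the connected component of `v` in `G`. -/
def compCard {N : ℕ} (G : SimpleGraph (Fin N)) (v : Fin N) : ℕ :=
  Fintype.card {w : Fin N // G.Reachable v w}

/-! It suffices to bound the boundary of a set `X` that induces a connected subgraph of the giant
and contains at most half of it, since the boundary of a general set is the disjoint union of the
boundaries of its connected pieces.

First moment. A set of `u ≤ a N` vertices, each joined inside the set to one of the roots in `R`,
contains a spanning forest with `u - |R|` edges. There are at most `C(N, u - |R|) u ^ (u - |R|)`
choices of set and forest, and each is present with only `θ u` boundary edges with probability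
about `(β / N) ^ (u - |R|) exp (-β u)`. As `β - 1 - log β > 0`, such sparse clusters have
probability at most `exp (-d u)`. With a single root this shows that connected sets with between
`(3 / d) log N` and `a N` vertices have more than `θ |X|` boundary edges. Smaller sets have at least
one boundary edge, which suffices as `log N = o(log² N)`.

Sprinkling. For `|X| ≥ a N`, write the random graph as `G ∪ H`, with `H` an independent random graph
with edge probability `η / N`, and suppose that a component of `G ∪ H` splits into two parts of
linear size with at most `k = N / log² N` edges between them. If the components of `G` with fewer
than `μ N` vertices cover at least `μ N` vertices of this component, then some of them form a sparse
cluster rooted at the endpoints of the few edges of `H`, which the first moment excludes. Otherwise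
each part has at least `μ N` vertices in large components of `G`. A union of pieces of the at most
`1 / μ` large components with at most `k` boundary edges in `G` can be chosen in
`exp (O(k log N)) = exp (o(N))` ways, whereas `H` has at most `k` edges between two given sets of
linear size with probability `exp (-c N)`. -/

open MeasureTheory ProbabilityTheory unitInterval
open scoped SimpleGraph Finset

theorem measureReal_le_card_mul_of_subset_biUnion {α κ : Type*} [MeasurableSpace α] {μ : Measure α}
    [IsFiniteMeasure μ] {A : Set α} {s : Finset κ} {B : κ → Set α} {c : ℝ}
    (hA : A ⊆ ⋃ i ∈ s, B i) (hB : ∀ i ∈ s, μ.real (B i) ≤ c) : μ.real A ≤ #s * c :=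
  calc μ.real A ≤ μ.real (⋃ i ∈ s, B i) := measureReal_mono hA (measure_ne_top _ _)
    _ ≤ ∑ i ∈ s, μ.real (B i) := measureReal_biUnion_finset_le _ _
    _ ≤ #s * c := by simpa using Finset.sum_le_card_nsmul _ _ _ hB

theorem one_sub_add_measureReal_le {α : Type*} [MeasurableSpace α] {μ : Measure α}
    [IsProbabilityMeasure μ] {A B C D : Set α} (h : (B ∪ C ∪ D)ᶜ ⊆ A) :
    1 - (μ.real B + μ.real C + μ.real D) ≤ μ.real A := by
  have hcover : B ∪ C ∪ D ∪ A = Set.univ := Set.compl_subset_iff_union.1 h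
  have hunion : μ.real Set.univ ≤ μ.real (B ∪ C ∪ D) + μ.real A := hcover ▸ measureReal_union_le _ _
  rw [probReal_univ] at hunion
  linarith [measureReal_union_le (μ := μ) (B ∪ C) D, measureReal_union_le (μ := μ) B C]
section SetBernoulli

variable {ι : Type*}

theorem integral_prod_setBernoulli [Fintype ι] (u : Set ι) (p : I) (f : ι → Prop → ℝ) :
    ∫ s, ∏ i, f i (i ∈ s) ∂setBer(u, p) = ∏ i, (p * f i (i ∈ u) + (1 - p) * f i False) := by
  rw [setBernoulli_eq_map, integral_map (by fun_prop) (Measurable.of_discrete.aestronglyMeasurable),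
    Measure.infinitePi_eq_pi]
  refine (integral_fintype_prod_eq_prod f).trans (Finset.prod_congr rfl fun i _ => ?_)
  rw [integral_add_measure .of_finite .of_finite]
  simp [integral_smul_nnreal_measure, NNReal.smul_def]

variable [Finite ι] {u : Set ι} {p q r : I} {F D : Finset ι}

theorem integral_indicator_mul_pow_setBernoulli (hF : ↑F ⊆ u) (hD : ↑D ⊆ u)
    (hFD : Disjoint F D) (p : I) (z : ℝ) :
    ∫ s, (if ↑F ⊆ s then 1 else 0) * z ^ #{i ∈ D | i ∈ s} ∂setBer(u, p) =
      (p : ℝ) ^ #F * (1 - p * (1 - z)) ^ #D := by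
  have := Fintype.ofFinite ι
  let f (i : ι) (P : Prop) : ℝ := (if i ∈ F → P then 1 else 0) * if i ∈ D ∧ P then z else 1
  have hf (s : Set ι) :
      (if ↑F ⊆ s then 1 else 0) * z ^ #{i ∈ D | i ∈ s} = ∏ i, f i (i ∈ s) := by
    rw [Finset.prod_mul_distrib, Finset.prod_ite_zero]
    simp [Set.subset_def, Finset.prod_ite, Finset.filter_and, Finset.inter_filter]
  have hfactor (i : ι) : p * f i (i ∈ u) + (1 - p) * f i False =
      (if i ∈ F then (p : ℝ) else 1) * if i ∈ D then 1 - p * (1 - z) else 1 := by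
    by_cases hiF : i ∈ F
    · simp [f, hiF, Finset.disjoint_left.1 hFD hiF, hF hiF]
    · by_cases hiD : i ∈ D
      · simp [f, hiF, hiD, hD hiD]
        ring
      · simp [f, hiF, hiD]
  simp_rw [hf, integral_prod_setBernoulli, hfactor, Finset.prod_mul_distrib, Finset.prod_ite_mem,
    Finset.univ_inter, Finset.prod_const]

theorem setBernoulli_subset_and_card_filter_le (hF : ↑F ⊆ u) (hD : ↑D ⊆ u) (hFD : Disjoint F D)
    (p : I) {z : ℝ} (hz₀ : 0 < z) (hz₁ : z ≤ 1) (κ : ℝ) :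
    setBer(u, p).real {s | ↑F ⊆ s ∧ #{i ∈ D | i ∈ s} ≤ κ} ≤
      z ^ (-κ) * p ^ #F * (1 - p * (1 - z)) ^ #D := by
  rw [mul_assoc, ← integral_indicator_mul_pow_setBernoulli hF hD hFD, Real.rpow_neg hz₀.le,
    ← div_eq_inv_mul, le_div_iff₀' (by positivity)]
  refine le_trans ?_ (mul_meas_ge_le_integral_of_nonneg (.of_forall fun s => by positivity)
    .of_finite (z ^ κ))
  refine mul_le_mul_of_nonneg_left (measureReal_mono ?_) (by positivity)
  rintro s ⟨hFs, hDs⟩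
  simp only [Set.mem_ofPred_eq, hFs, if_true, one_mul]
  rw [← Real.rpow_natCast]
  exact Real.rpow_le_rpow_of_exponent_ge hz₀ hz₁ hDs

theorem setBernoulli_lt_card_filter_le (hD : ↑D ⊆ u) (p : I) (κ : ℝ) :
    setBer(u, p).real {s | κ < #{i ∈ D | i ∈ s}} ≤ 2 ^ (-κ) * (1 + p) ^ #D := by
  have hmoment := integral_indicator_mul_pow_setBernoulli (F := ∅) (by simp) hD (by simp) p 2
  norm_num at hmoment
  rw [← hmoment, Real.rpow_neg zero_le_two,
    ← div_eq_inv_mul, le_div_iff₀' (by positivity)]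
  refine le_trans ?_ (mul_meas_ge_le_integral_of_nonneg (.of_forall fun s => by positivity)
    .of_finite (2 ^ κ))
  refine mul_le_mul_of_nonneg_left (measureReal_mono ?_) (by positivity)
  intro s hs
  rw [Set.mem_ofPred_eq, ← Real.rpow_natCast]
  exact Real.rpow_le_rpow_of_exponent_le one_le_two (le_of_lt hs)

theorem setBernoulli_real_disjoint (u : Set ι) (p : I) (F : Finset ι) :
    setBer(u, p).real {s | Disjoint ↑F s} = (σ p : ℝ) ^ #{i ∈ F | i ∈ u} := by
  have := Fintype.ofFinite ι
  let f (i : ι) (P : Prop) : ℝ := if i ∈ F → ¬P then 1 else 0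
  have hf (s : Set ι) : {s : Set ι | Disjoint ↑F s}.indicator 1 s = ∏ i, f i (i ∈ s) := by
    simp [f, Set.indicator_apply, Set.disjoint_left, Finset.prod_ite_zero]
  have hfactor (i : ι) : p * f i (i ∈ u) + (1 - p) * f i False =
      if i ∈ {i ∈ F | i ∈ u} then (σ p : ℝ) else 1 := by
    by_cases hi : i ∈ F <;> by_cases hiu : i ∈ u <;> simp [f, hi, hiu]
  simp_rw [← integral_indicator_one MeasurableSet.of_discrete, hf, integral_prod_setBernoulli,
    hfactor, Finset.prod_ite_mem, Finset.univ_inter, Finset.prod_const]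

theorem generateFrom_range_disjoint :
    MeasurableSpace.generateFrom (Set.range fun F : Finset ι => {s : Set ι | Disjoint ↑F s}) =
      Set.instMeasurableSpace := by
  refine le_antisymm (fun s _ => .of_discrete) ?_
  set m := MeasurableSpace.generateFrom (Set.range fun F : Finset ι => {s : Set ι | Disjoint ↑F s})
  suffices Measurable[m, Set.instMeasurableSpace] (id : Set ι → Set ι) from fun A hA => this hA
  refine measurable_set_iff.2 fun i => measurableSet_setOfPred.1 ?_
  have hi : MeasurableSet[m] {s : Set ι | Disjoint ↑({i} : Finset ι) s} :=
    MeasurableSpace.measurableSet_generateFrom ⟨{i}, rfl⟩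
  simpa [Set.compl_ofPred] using hi.compl

theorem setBernoulli_map_union (h : σ r = σ p * σ q) :
    (setBer(u, p).prod setBer(u, q)).map (fun s => s.1 ∪ s.2) = setBer(u, r) := by
  have : IsProbabilityMeasure ((setBer(u, p).prod setBer(u, q)).map fun s => s.1 ∪ s.2) :=
    Measure.isProbabilityMeasure_map (by fun_prop)
  -- The avoidance events form a π-system, and independence multiplies their probabilities.
  refine ext_of_generate_finite _ generateFrom_range_disjoint.symm ?_ ?_ (by simp)
  · rintro _ ⟨F, rfl⟩ _ ⟨F', rfl⟩ -
    exact ⟨F ∪ F', by ext; simp⟩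
  · rintro _ ⟨F, rfl⟩
    have hpre : (fun s : Set ι × Set ι => s.1 ∪ s.2) ⁻¹' {s | Disjoint ↑F s} =
        {s | Disjoint ↑F s} ×ˢ {s | Disjoint ↑F s} := by
      ext
      simp
    rw [← measureReal_eq_measureReal_iff, map_measureReal_apply .of_discrete .of_discrete, hpre,
      measureReal_prod_prod]
    simp only [setBernoulli_real_disjoint, h, ← mul_pow]
    norm_cast

end SetBernoulli

section BinomialRandom

variable {V : Type*}

instance [Finite V] : DiscreteMeasurableSpace (SimpleGraph V) where
  forall_measurableSet A := by
    rw [← A.preimage_image_eq SimpleGraph.edgeSet_injective]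
    exact SimpleGraph.measurable_edgeSet .of_discrete

theorem binomialRandom_real_apply [Finite V] (p : I) (A : Set (SimpleGraph V)) :
    G(V, p).real A = setBer((Sym2.diagSet : Set (Sym2 V))ᶜ, p).real
      {s | SimpleGraph.fromEdgeSet s ∈ A} := by
  rw [SimpleGraph.binomialRandom_eq_map,
    map_measureReal_apply SimpleGraph.measurable_fromEdgeSet .of_discrete]
  rfl

variable {F D : Finset (Sym2 V)}

theorem binomialRandom_subset_edgeSet_and_card_le [Finite V]
    (hF : ↑F ⊆ (Sym2.diagSet : Set (Sym2 V))ᶜ) (hD : ↑D ⊆ (Sym2.diagSet : Set (Sym2 V))ᶜ)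
    (hFD : Disjoint F D) (p : I) {z : ℝ} (hz₀ : 0 < z) (hz₁ : z ≤ 1) (κ : ℝ) :
    G(V, p).real {G | ↑F ⊆ G.edgeSet ∧ #{e ∈ D | e ∈ G.edgeSet} ≤ κ} ≤
      z ^ (-κ) * p ^ #F * (1 - p * (1 - z)) ^ #D := by
  rw [binomialRandom_real_apply]
  refine le_trans (measureReal_mono ?_)
    (setBernoulli_subset_and_card_filter_le hF hD hFD p hz₀ hz₁ κ)
  rintro s ⟨hFs, hDs⟩
  simp only [SimpleGraph.edgeSet_fromEdgeSet] at hFs hDs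
  refine ⟨fun e he => (hFs he).1, hDs.trans' ?_⟩
  exact_mod_cast Finset.card_le_card fun e => by
    simpa +contextual [Finset.mem_filter] using fun he _ => hD he

theorem binomialRandom_lt_ncard_edgeSet_le [Fintype V] (p : I) (κ : ℝ) :
    G(V, p).real {G | κ < G.edgeSet.ncard} ≤ 2 ^ (-κ) * (1 + p) ^ (Fintype.card V).choose 2 := by
  rw [binomialRandom_real_apply, ← Sym2.card_diagSet_compl, ← Set.toFinset_card]
  refine le_trans (measureReal_mono fun s (hs : κ < _) => lt_of_lt_of_eq hs ?_)
    (setBernoulli_lt_card_filter_le (by simp) p κ)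
  rw [Set.ncard_eq_toFinset_card']
  congr 2
  ext e
  simp [and_comm]

theorem binomialRandom_map_sup [Finite V] {p q r : I} (h : σ r = σ p * σ q) :
    (G(V, p).prod G(V, q)).map (fun G => G.1 ⊔ G.2) = G(V, r) := by
  simp only [SimpleGraph.binomialRandom_eq_map]
  rw [Measure.map_prod_map _ _ (by fun_prop) (by fun_prop),
    Measure.map_map .of_discrete .of_discrete,
    ← setBernoulli_map_union h, Measure.map_map .of_discrete .of_discrete]
  congr 1
  ext1 s
  simp

theorem binomialRandom_real_singleton [Fintype V] [DecidableEq V] (p : I) (G : SimpleGraph V) :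
    G(V, p).real {G} = ∏ e : Sym2 V with ¬e.IsDiag, if e ∈ G.edgeSet then (p : ℝ) else 1 - p := by
  rw [measureReal_def, SimpleGraph.binomialRandom_apply', ← measureReal_def, Set.image_singleton,
    setBernoulli_real_singleton p G.edgeSet_subset_compl_diagSet (Set.toFinite _)]
  simp only [Finset.prod_ite, Finset.prod_const, Set.ncard_eq_toFinset_card']
  congr 3 <;> ext e
  · simpa using G.not_isDiag_of_mem_edgeSet
  · simp

theorem prod_sym2_not_isDiag {ι M : Type*} [LinearOrder ι] [Fintype ι] [CommMonoid M]
    (f : Sym2 ι → M) :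
    ∏ e : Sym2 ι with ¬e.IsDiag, f e = ∏ i, ∏ j, if i < j then f s(i, j) else 1 := by
  have hadd : ∏ e ∈ (Finset.univ : Finset ι).sym2 with ¬e.IsDiag, f e =
      ∏ x ∈ Finset.univ.offDiag with x.1 < x.2, f s(x.1, x.2) :=
    Finset.sum_sym2_filter_not_isDiag (M := Additive M) Finset.univ f
  rw [← Finset.sym2_univ, hadd, ← Finset.prod_product', Finset.univ_product_univ,
    ← Finset.prod_filter]
  congr 1
  ext ⟨i, j⟩
  simpa using ne_of_lt

theorem graphWeight_const (p : I) {N : ℕ} (G : SimpleGraph (Fin N)) :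
    graphWeight (fun _ _ => p) N G = G(Fin N, p).real {G} := by
  rw [binomialRandom_real_singleton, prod_sym2_not_isDiag]
  rfl

theorem graphProb_const (p : I) {N : ℕ} (A : SimpleGraph (Fin N) → Prop) :
    graphProb (fun _ _ => p) N A = G(Fin N, p).real {G | A G} := by
  simp_rw [graphProb, graphWeight_const, ← Finset.sum_filter]
  rw [sum_measureReal_singleton]
  simp

end BinomialRandom

/-- The edge probability `β / N` as an element of the unit interval, truncated if `N < β`. -/
def erParam (β : ℝ) (N : ℕ) : I := Set.projIcc 0 1 zero_le_one (β / N)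

theorem coe_erParam {β : ℝ} {N : ℕ} (hβ : 0 ≤ β) (hN : β ≤ N) : (erParam β N : ℝ) = β / N := by
  rw [erParam, Set.projIcc_of_mem zero_le_one ⟨by positivity, div_le_one_of_le₀ hN N.cast_nonneg⟩]

theorem erProb_eq {β : ℝ} {N : ℕ} (hβ : 0 ≤ β) (hN : β ≤ N) (A : SimpleGraph (Fin N) → Prop) :
    erProb β N A = G(Fin N, erParam β N).real {G | A G} := by
  rw [← graphProb_const, coe_erParam hβ hN, erProb]

section Forests

variable {V : Type*} {G H : SimpleGraph V} {U R : Finset V}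

/-- Every vertex of `U` is joined inside `U` to a root in `R`. -/
def IsRooted (G : SimpleGraph V) (U R : Finset V) : Prop :=
  ∀ v ∈ U, ∃ r ∈ R, ∃ w : G.Walk v r, ∀ x ∈ w.support, x ∈ U

theorem IsRooted.mono (hGH : G ≤ H) (h : IsRooted G U R) : IsRooted H U R := by
  intro v hv
  obtain ⟨r, hr, w, hw⟩ := h v hv
  exact ⟨r, hr, w.mapLe hGH, by simpa using hw⟩

theorem IsRooted.exists_parent (h : IsRooted G U R) :
    ∃ (height : V → ℕ) (parent : V → V), ∀ v ∈ U, v ∉ R →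
      parent v ∈ U ∧ G.Adj v (parent v) ∧ height (parent v) < height v := by
  let IsLength (v : V) (k : ℕ) : Prop :=
    ∃ r ∈ R, ∃ w : G.Walk v r, (∀ x ∈ w.support, x ∈ U) ∧ w.length = k
  let height (v : V) : ℕ := sInf {k | IsLength v k}
  suffices ∀ v, ∃ y, v ∈ U → v ∉ R → y ∈ U ∧ G.Adj v y ∧ height y < height v by
    choose parent hparent using this
    exact ⟨height, parent, hparent⟩
  intro v
  by_cases hv : v ∈ U
  · obtain ⟨r, hr, w, hwU⟩ := h v hv
    obtain ⟨r, hr, w, hwU, hlen⟩ : IsLength v (height v) :=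
      Nat.sInf_mem (s := {k | IsLength v k}) ⟨_, r, hr, w, hwU, rfl⟩
    cases w with
    | nil => exact ⟨v, fun _ hvR => absurd hr hvR⟩
    | @cons _ y _ hvy w =>
      simp only [SimpleGraph.Walk.support_cons, List.forall_mem_cons] at hwU
      refine ⟨y, fun _ _ => ⟨hwU.2 y w.start_mem_support, hvy, ?_⟩⟩
      rw [← hlen, SimpleGraph.Walk.length_cons, Nat.lt_succ_iff]
      exact Nat.sInf_le ⟨r, hr, w, hwU.2, rfl⟩
  · exact ⟨v, fun hvU => absurd hvU hv⟩

theorem IsRooted.exists_forest [DecidableEq V] (h : IsRooted G U R) :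
    ∃ f : ↥(U \ R) → ↥U,
      Function.Injective (fun v => s(v.1, (f v).1)) ∧ ∀ v, G.Adj v.1 (f v).1 := by
  obtain ⟨height, parent, hparent⟩ := h.exists_parent
  simp only [← and_imp, ← Finset.mem_sdiff] at hparent
  refine ⟨fun v => ⟨parent v, (hparent v v.2).1⟩, fun v w hvw => ?_, fun v => (hparent v v.2).2.1⟩
  obtain ⟨hvw, -⟩ | ⟨hvw, hwv⟩ := Sym2.eq_iff.1 hvw
  · exact Subtype.ext hvw
  · -- Two vertices that are each other's parent would both be lower than the other.
    have hv := (hparent v v.2).2.2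
    have hw := (hparent w w.2).2.2
    simp only at hvw hwv
    rw [hwv] at hv
    rw [← hvw] at hw
    exact absurd hv hw.not_gt

end Forests

section Boundary

variable {V : Type*} {G H : SimpleGraph V} {S X Y X' Y' : Finset V}

theorem card_interedges_mono (hGH : G ≤ H) (hX : X ⊆ X') (hY : Y ⊆ Y') :
    #(G.interedges X Y) ≤ #(H.interedges X' Y') :=
  Finset.card_le_card fun e => by
    simpa only [SimpleGraph.mem_interedges_iff] using fun ⟨h₁, h₂, h⟩ => ⟨hX h₁, hY h₂, hGH h⟩

theorem injOn_mk_product (hXY : Disjoint X Y) :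
    Set.InjOn (fun x : V × V => s(x.1, x.2)) ↑(X ×ˢ Y) := by
  rintro ⟨i, j⟩ hij ⟨i', j'⟩ hij' h
  simp only [Finset.coe_product, Set.mem_prod, Finset.mem_coe] at hij hij'
  obtain ⟨rfl, rfl⟩ | ⟨rfl, rfl⟩ := Sym2.eq_iff.1 h
  · rfl
  · exact absurd hij'.2 (Finset.disjoint_left.1 hXY hij.1)

variable [DecidableEq V]

/-- The pairs with one endpoint in `X` and one in `Y`, as potential edges. -/
def pairsBetween (X Y : Finset V) : Finset (Sym2 V) := (X ×ˢ Y).image fun x => s(x.1, x.2)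

theorem card_pairsBetween (hXY : Disjoint X Y) : #(pairsBetween X Y) = #X * #Y := by
  rw [pairsBetween, Finset.card_image_of_injOn (injOn_mk_product hXY), Finset.card_product]

theorem pairsBetween_subset_compl_diagSet (hXY : Disjoint X Y) :
    ↑(pairsBetween X Y) ⊆ (Sym2.diagSet : Set (Sym2 V))ᶜ := by
  simp only [pairsBetween, Finset.coe_image, Set.image_subset_iff]
  rintro ⟨i, j⟩ hij
  have hij := Finset.mem_product.1 (Finset.mem_coe.1 hij)
  simpa using fun h : i = j => Finset.disjoint_left.1 hXY hij.1 (h ▸ hij.2)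

theorem card_filter_pairsBetween (G : SimpleGraph V) (hXY : Disjoint X Y) :
    #{e ∈ pairsBetween X Y | e ∈ G.edgeSet} = #(G.interedges X Y) := by
  rw [pairsBetween, Finset.filter_image, Finset.card_image_of_injOn
    ((injOn_mk_product hXY).mono (Finset.coe_subset.2 (Finset.filter_subset _ _)))]
  rfl

variable [Fintype V]

theorem mk_mem_pairsBetween_compl {v w : V} :
    s(v, w) ∈ pairsBetween S Sᶜ ↔ ¬(v ∈ S ↔ w ∈ S) := by
  simp only [pairsBetween, Finset.mem_image, Finset.mem_product, Finset.mem_compl, Prod.exists,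
    Sym2.eq_iff]
  grind

theorem crossCount_eq_card_interedges (G : SimpleGraph V) (S : Finset V) :
    crossCount G S = #(G.interedges S Sᶜ) := by
  rw [crossCount, ← Finset.sum_product', SimpleGraph.interedges, Rel.interedges,
    Finset.card_filter]

theorem crossCount_le_card_interedges (h : ∀ v ∈ X, ∀ w, G.Adj v w → w ∈ X ∪ Y) :
    crossCount G X ≤ #(G.interedges X Y) := by
  rw [crossCount_eq_card_interedges]
  refine Finset.card_le_card fun e => ?_
  simp only [SimpleGraph.mem_interedges_iff, Finset.mem_compl]
  rintro ⟨h₁, h₂, hadj⟩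
  exact ⟨h₁, (Finset.mem_union.1 (h _ h₁ _ hadj)).resolve_left h₂, hadj⟩

theorem crossCount_sup_le (G H : SimpleGraph V) (S : Finset V) :
    crossCount (G ⊔ H) S ≤ crossCount G S + crossCount H S := by
  simp only [crossCount_eq_card_interedges]
  refine (Finset.card_le_card fun e => ?_).trans (Finset.card_union_le _ _)
  simp only [SimpleGraph.mem_interedges_iff, Finset.mem_union, SimpleGraph.sup_adj]
  tauto

theorem card_filter_pairsBetween_compl (G : SimpleGraph V) (S : Finset V) :
    #{e ∈ pairsBetween S Sᶜ | e ∈ G.edgeSet} = crossCount G S := by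
  rw [card_filter_pairsBetween G disjoint_compl_right, crossCount_eq_card_interedges]

theorem crossCount_le_ncard_edgeSet (G : SimpleGraph V) (S : Finset V) :
    crossCount G S ≤ G.edgeSet.ncard := by
  rw [← card_filter_pairsBetween_compl, ← Set.ncard_coe_finset]
  exact Set.ncard_le_ncard fun e he => (Finset.mem_filter.1 he).2

end Boundary

theorem ncard_support_le {V : Type*} [Finite V] (G : SimpleGraph V) :
    G.support.ncard ≤ 2 * G.edgeSet.ncard := by
  have := Fintype.ofFinite V
  rw [Set.ncard_eq_toFinset_card' G.edgeSet, ← SimpleGraph.edgeFinset,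
    ← G.sum_degrees_support_eq_twice_card_edges, Set.ncard_eq_toFinset_card',
    Finset.card_eq_sum_ones]
  exact Finset.sum_le_sum fun v hv => (G.degree_pos_iff_mem_support v).2 (by simpa using hv)

section SparseClusters

variable {V : Type*} [Fintype V] [DecidableEq V] {U R : Finset V} {p : I} {z : ℝ}

theorem binomialRandom_isRooted_and_crossCount_le (p : I) (hz₀ : 0 < z) (hz₁ : z ≤ 1)
    (U R : Finset V) (κ : ℝ) :
    G(V, p).real {G | IsRooted G U R ∧ crossCount G U ≤ κ} ≤
      #U ^ #(U \ R) *
        (z ^ (-κ) * p ^ #(U \ R) * (1 - p * (1 - z)) ^ (#U * (Fintype.card V - #U))) := by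
  let edge (f : ↥(U \ R) → ↥U) (v : ↥(U \ R)) : Sym2 V := s(v.1, (f v).1)
  let forest (f : ↥(U \ R) → ↥U) : Finset (Sym2 V) := Finset.univ.image (edge f)
  let IsForest (f : ↥(U \ R) → ↥U) : Prop :=
    Function.Injective (edge f) ∧ ↑(forest f) ⊆ (Sym2.diagSet : Set (Sym2 V))ᶜ
  have hsub : {G : SimpleGraph V | IsRooted G U R ∧ crossCount G U ≤ κ} ⊆
      ⋃ f ∈ ({f | IsForest f} : Finset (↥(U \ R) → ↥U)),
        {G | ↑(forest f) ⊆ G.edgeSet ∧ #{e ∈ pairsBetween U Uᶜ | e ∈ G.edgeSet} ≤ κ} := by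
    rintro G ⟨hG, hcross⟩
    obtain ⟨f, hinj, hadj⟩ := hG.exists_forest
    have hforest : ↑(forest f) ⊆ G.edgeSet := by
      simpa [forest, edge, Set.range_subset_iff] using hadj
    refine Set.mem_biUnion (x := f) ?_ ⟨hforest, by rwa [card_filter_pairsBetween_compl]⟩
    simpa using ⟨hinj, hforest.trans G.edgeSet_subset_compl_diagSet⟩
  have hforest (f : ↥(U \ R) → ↥U) (hf : IsForest f) :
      G(V, p).real {G | ↑(forest f) ⊆ G.edgeSet ∧ #{e ∈ pairsBetween U Uᶜ | e ∈ G.edgeSet} ≤ κ} ≤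
        z ^ (-κ) * p ^ #(U \ R) * (1 - p * (1 - z)) ^ (#U * (Fintype.card V - #U)) := by
    have hdisj : Disjoint (forest f) (pairsBetween U Uᶜ) := by
      simp only [forest, pairsBetween, edge, Finset.disjoint_left, Finset.mem_image,
        Finset.mem_product, Finset.mem_compl, Finset.mem_univ, true_and]
      rintro _ ⟨v, rfl⟩ ⟨x, hx, hxv⟩
      have hv := Finset.mem_sdiff.1 v.2
      have := (f v).2
      grind
    refine (binomialRandom_subset_edgeSet_and_card_le hf.2
      (pairsBetween_subset_compl_diagSet disjoint_compl_right) hdisj p hz₀ hz₁ κ).trans_eq ?_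
    rw [card_pairsBetween disjoint_compl_right, Finset.card_compl,
      Finset.card_image_of_injective _ hf.1, Finset.card_univ, Fintype.card_coe]
  have hbase : 0 ≤ 1 - p * (1 - z) := by nlinarith [p.2.1, p.2.2]
  have hp := p.2.1
  refine (measureReal_le_card_mul_of_subset_biUnion hsub fun f hf =>
    hforest f (Finset.mem_filter.1 hf).2).trans ?_
  gcongr
  refine (Nat.cast_le.2 (Finset.card_le_univ _)).trans_eq ?_
  rw [Fintype.card_fun, Fintype.card_coe, Fintype.card_coe, Nat.cast_pow]

/-- There is a set of `u` vertices containing `R`, each of them joined to `R` inside the set, with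
at most `θ * u` boundary edges. -/
def HasSparseCluster (G : SimpleGraph V) (θ : ℝ) (R : Finset V) (u : ℕ) : Prop :=
  ∃ U, R ⊆ U ∧ #U = u ∧ IsRooted G U R ∧ crossCount G U ≤ θ * u

theorem card_filter_superset_le (R : Finset V) (u : ℕ) :
    #{U : Finset V | R ⊆ U ∧ #U = u} ≤ (Fintype.card V).choose (u - #R) := by
  rw [← Finset.card_univ, ← Finset.card_powersetCard]
  refine Finset.card_le_card_of_injOn (· \ R) (fun U hU => ?_) fun U hU U' hU' h => ?_
  · obtain ⟨hRU, rfl⟩ := (Finset.mem_filter.1 hU).2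
    simp [Finset.card_sdiff_of_subset hRU]
  · have hRU := (Finset.mem_filter.1 hU).2.1
    have hRU' := (Finset.mem_filter.1 hU').2.1
    rw [← Finset.sdiff_union_of_subset hRU, ← Finset.sdiff_union_of_subset hRU']
    exact congrArg (· ∪ R) h

theorem binomialRandom_hasSparseCluster_le (p : I) (hz₀ : 0 < z) (hz₁ : z ≤ 1) (θ : ℝ) {u : ℕ}
    (R : Finset V) :
    G(V, p).real {G | HasSparseCluster G θ R u} ≤
      (Fintype.card V).choose (u - #R) * (u ^ (u - #R) *
        (z ^ (-(θ * u)) * p ^ (u - #R) * (1 - p * (1 - z)) ^ (u * (Fintype.card V - u)))) := by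
  have hsub : {G : SimpleGraph V | HasSparseCluster G θ R u} ⊆
      ⋃ U ∈ ({U | R ⊆ U ∧ #U = u} : Finset (Finset V)),
        {G | IsRooted G U R ∧ crossCount G U ≤ θ * u} := by
    rintro G ⟨U, hRU, hU, h⟩
    exact Set.mem_biUnion (x := U) (by simpa using ⟨hRU, hU⟩) h
  have hbase : 0 ≤ 1 - p * (1 - z) := by nlinarith [p.2.1, p.2.2]
  have hp := p.2.1
  refine (measureReal_le_card_mul_of_subset_biUnion hsub fun U hU => ?_).trans
    (mul_le_mul_of_nonneg_right (Nat.cast_le.2 (card_filter_superset_le R u)) (by positivity))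
  obtain ⟨hRU, rfl⟩ := (Finset.mem_filter.1 hU).2
  simpa only [Finset.card_sdiff_of_subset hRU] using
    binomialRandom_isRooted_and_crossCount_le p hz₀ hz₁ U R (θ * #U)

end SparseClusters

section SparseClusterDecay

variable {V : Type*} [Fintype V] [DecidableEq V] {R : Finset V} {p : I} {z a θ d : ℝ}

theorem one_add_pow_le_exp {x : ℝ} (hx : -1 ≤ x) (n : ℕ) : (1 + x) ^ n ≤ Real.exp (n * x) := by
  rw [Real.exp_nat_mul]
  exact pow_le_pow_left₀ (by linarith) (by linarith [Real.add_one_le_exp x]) n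

theorem choose_mul_pow_mul_pow_le_exp {N n u : ℕ} {p : ℝ} (hNp : 1 ≤ p * N) (hnu : n ≤ u) :
    N.choose n * (u ^ n * p ^ n) ≤ Real.exp ((1 + Real.log (p * N)) * u) :=
  calc (N.choose n * (u ^ n * p ^ n) : ℝ)
    _ ≤ N ^ n / n.factorial * (u ^ n * p ^ n) := by
      have hp : 0 ≤ p := by
        by_contra! hp
        nlinarith [N.cast_nonneg (α := ℝ)]
      gcongr
      exact Nat.choose_le_pow_div n N
    _ = u ^ n / n.factorial * (p * N) ^ n := by
      rw [mul_pow]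
      ring
    _ ≤ Real.exp u * (p * N) ^ u := by
      gcongr
      exact Real.pow_div_factorial_le_exp _ u.cast_nonneg n
    _ = Real.exp ((1 + Real.log (p * N)) * u) := by
      rw [add_mul, one_mul, Real.exp_add, Real.exp_mul, Real.exp_log (by linarith),
        Real.rpow_natCast]

theorem one_sub_mul_pow_le_exp {N u : ℕ} (p : I) (hz₀ : 0 ≤ z) (hz₁ : z ≤ 1) (hu : u ≤ z * N) :
    (1 - p * (1 - z)) ^ (u * (N - u)) ≤ Real.exp (-((p : ℝ) * N * (1 - 2 * z) * u)) := by
  have huN : u ≤ N := Nat.cast_le.1 (hu.trans (mul_le_of_le_one_left N.cast_nonneg hz₁))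
  refine (one_add_pow_le_exp (x := -(p * (1 - z))) (by nlinarith [p.2.1, p.2.2]) _).trans
    (Real.exp_le_exp.2 ?_)
  push_cast [huN]
  have hpu : 0 ≤ p * (1 - z) * u := mul_nonneg (mul_nonneg p.2.1 (by linarith)) u.cast_nonneg
  have hpNu : 0 ≤ (p : ℝ) * N * u := mul_nonneg (mul_nonneg p.2.1 N.cast_nonneg) u.cast_nonneg
  nlinarith [mul_le_mul_of_nonneg_left hu hpu, mul_nonneg hpNu (sq_nonneg z)]

/-- Sparse clusters of at most `a * card V` vertices are exponentially unlikely in `G(V, p)`, at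
rate `d` per vertex and uniformly in the set of roots. -/
def SparseClusterDecay (V : Type*) [Fintype V] [DecidableEq V] (p : I) (a θ d : ℝ) : Prop :=
  ∀ (R : Finset V) (u : ℕ), u ≤ a * Fintype.card V →
    G(V, p).real {G | HasSparseCluster G θ R u} ≤ Real.exp (-(d * u))

theorem sparseClusterDecay (hp : 1 ≤ (p : ℝ) * Fintype.card V) (hz₀ : 0 < z) (hz₁ : z ≤ 1) (θ : ℝ) :
    SparseClusterDecay V p z θ ((p : ℝ) * Fintype.card V * (1 - 2 * z) - 1 -
      Real.log ((p : ℝ) * Fintype.card V) + θ * Real.log z) := by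
  intro R u hu
  set N := Fintype.card V
  have hbase : 0 ≤ 1 - p * (1 - z) := by nlinarith [p.2.1, p.2.2]
  calc G(V, p).real {G | HasSparseCluster G θ R u}
    _ ≤ N.choose (u - #R) * (u ^ (u - #R) *
          (z ^ (-(θ * u)) * p ^ (u - #R) * (1 - p * (1 - z)) ^ (u * (N - u)))) :=
      binomialRandom_hasSparseCluster_le p hz₀ hz₁ θ R
    _ = N.choose (u - #R) * (u ^ (u - #R) * p ^ (u - #R)) * Real.exp (Real.log z * -(θ * u)) *
          (1 - p * (1 - z)) ^ (u * (N - u)) := by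
      rw [Real.rpow_def_of_pos hz₀]
      ring
    _ ≤ Real.exp ((1 + Real.log ((p : ℝ) * N)) * u) * Real.exp (Real.log z * -(θ * u)) *
          Real.exp (-((p : ℝ) * N * (1 - 2 * z) * u)) := by
      gcongr
      · exact choose_mul_pow_mul_pow_le_exp hp (Nat.sub_le _ _)
      · exact one_sub_mul_pow_le_exp p hz₀.le hz₁ hu
    _ = _ := by
      rw [← Real.exp_add, ← Real.exp_add]
      ring_nf

theorem SparseClusterDecay.mono {d' : ℝ} (h : SparseClusterDecay V p a θ d) (hd : d' ≤ d) :
    SparseClusterDecay V p a θ d' := fun R u hu =>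
  (h R u hu).trans (Real.exp_le_exp.2 (neg_le_neg (mul_le_mul_of_nonneg_right hd u.cast_nonneg)))

theorem exists_sparseClusterDecay {β : ℝ} (hβ : 1 < β) :
    ∃ a θ d : ℝ, 0 < a ∧ a < 1 ∧ 0 < θ ∧ 0 < d ∧ ∀ (V : Type*) [Fintype V] [DecidableEq V] (p : I),
      (p : ℝ) * Fintype.card V = β → SparseClusterDecay V p a θ d := by
  have hβ₀ : 0 < β := by linarith
  have hrate : 0 < β - 1 - Real.log β := by linarith [Real.log_lt_sub_one_of_pos hβ₀ hβ.ne']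
  set d := β - 1 - Real.log β
  have hz : 0 < min (1 / 2) (d / (4 * β)) := by positivity
  set z := min (1 / 2) (d / (4 * β))
  have hz₁ : z < 1 := (min_le_left _ _).trans_lt (by norm_num)
  have hzβ : z * (4 * β) ≤ d := (le_div_iff₀ (by positivity)).1 (min_le_right _ _)
  have hlog : Real.log z < 0 := Real.log_neg hz hz₁
  refine ⟨z, d / (4 * -Real.log z), d / 4, hz, hz₁,
    by have := neg_pos.2 hlog; positivity, by positivity,
    fun V _ _ p hp => (sparseClusterDecay (hp.symm ▸ hβ.le) hz hz₁.le _).mono ?_⟩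
  have hθ : d / (4 * -Real.log z) * Real.log z = -(d / 4) := by
    have := hlog.ne
    field_simp
  rw [hp, hθ]
  linarith

end SparseClusterDecay

section ClusterSizeRange

variable {V : Type*} [Fintype V] [DecidableEq V] {p : I} {a θ d : ℝ}

/-- Some sparse cluster with between `m` and `M` vertices is rooted at a member of `𝓡`. -/
def HasSparseClusterOfSize (G : SimpleGraph V) (θ : ℝ) (𝓡 : Finset (Finset V)) (m M : ℝ) : Prop :=
  ∃ R ∈ 𝓡, ∃ u : ℕ, m ≤ u ∧ u ≤ M ∧ HasSparseCluster G θ R u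

theorem SparseClusterDecay.hasSparseClusterOfSize_le (h : SparseClusterDecay V p a θ d)
    (hd : 0 ≤ d) (𝓡 : Finset (Finset V)) (m : ℝ) :
    G(V, p).real {G | HasSparseClusterOfSize G θ 𝓡 m (a * Fintype.card V)} ≤
      #𝓡 * (Fintype.card V + 1) * Real.exp (-(d * m)) := by
  let sizes : Finset ℕ := {u ∈ Finset.range (Fintype.card V + 1) | m ≤ u ∧ u ≤ a * Fintype.card V}
  have hsub : {G : SimpleGraph V | HasSparseClusterOfSize G θ 𝓡 m (a * Fintype.card V)} ⊆
      ⋃ x ∈ 𝓡 ×ˢ sizes, {G | HasSparseCluster G θ x.1 x.2} := by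
    rintro G ⟨R, hR, u, hmu, hua, U, hRU, rfl, hU⟩
    refine Set.mem_biUnion (x := (R, #U)) ?_ ⟨U, hRU, rfl, hU⟩
    simpa [sizes, hR, hmu, hua, Nat.lt_succ_iff] using Finset.card_le_univ U
  refine (measureReal_le_card_mul_of_subset_biUnion hsub fun x hx => ?_).trans
    (mul_le_mul_of_nonneg_right ?_ (Real.exp_pos _).le)
  · obtain ⟨-, hmu, hua⟩ := Finset.mem_filter.1 (Finset.mem_product.1 hx).2
    exact (h _ _ hua).trans
      (Real.exp_le_exp.2 (neg_le_neg (mul_le_mul_of_nonneg_left hmu hd)))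
  · rw [Finset.card_product, Nat.cast_mul]
    gcongr
    exact_mod_cast (Finset.card_filter_le _ _).trans_eq (Finset.card_range _)

theorem card_filter_card_le_le {α : Type*} [Fintype α] {x : ℝ} (hx₀ : 0 < x) (hx₁ : x ≤ 1)
    (k : ℝ) : #{s : Finset α | #s ≤ k} ≤ (1 + x) ^ Fintype.card α * x ^ (-k) := by
  rw [Real.rpow_neg hx₀.le, ← div_eq_mul_inv, le_div_iff₀ (by positivity), add_comm 1,
    ← Fintype.sum_pow_mul_eq_add_pow]
  calc (#{s : Finset α | #s ≤ k} * x ^ k : ℝ)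
    _ = ∑ s : Finset α with #s ≤ k, x ^ k := by simp
    _ ≤ ∑ s : Finset α with #s ≤ k, x ^ #s := by
      refine Finset.sum_le_sum fun s hs => ?_
      rw [← Real.rpow_natCast]
      exact Real.rpow_le_rpow_of_exponent_ge hx₀ hx₁ (Finset.mem_filter.1 hs).2
    _ ≤ ∑ s : Finset α, x ^ #s :=
      Finset.sum_le_univ_sum_of_nonneg fun s => by positivity
    _ = ∑ s : Finset α, x ^ #s * 1 ^ (Fintype.card α - #s) := by simp

theorem exists_card_filter_card_le_le_exp {ε : ℝ} (hε : 0 < ε) :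
    ∃ τ > (0 : ℝ), ∀ (α : Type*) [Fintype α],
      #{s : Finset α | #s ≤ τ * Fintype.card α} ≤ Real.exp (ε * Fintype.card α) := by
  have hx : 0 < min (1 / 2) (ε / 2) := by positivity
  set x := min (1 / 2) (ε / 2)
  have hx₁ : x < 1 := (min_le_left _ _).trans_lt (by norm_num)
  have hlog : 0 < -Real.log x := neg_pos.2 (Real.log_neg hx hx₁)
  refine ⟨ε / 2 / -Real.log x, by positivity, fun α _ => ?_⟩
  set n := Fintype.card α
  have hτ : Real.log x * -(ε / 2 / -Real.log x * n) = ε / 2 * n := by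
    have := (neg_pos.1 hlog).ne
    field_simp
  calc (#{s : Finset α | #s ≤ ε / 2 / -Real.log x * n} : ℝ)
    _ ≤ (1 + x) ^ n * x ^ (-(ε / 2 / -Real.log x * n)) := card_filter_card_le_le hx hx₁.le _
    _ ≤ Real.exp (n * x) * Real.exp (ε / 2 * n) := by
      rw [Real.rpow_def_of_pos hx, hτ]
      gcongr
      exact one_add_pow_le_exp (by linarith) n
    _ ≤ Real.exp (ε * n) := by
      rw [← Real.exp_add, Real.exp_le_exp]
      nlinarith [min_le_right (1 / 2) (ε / 2), n.cast_nonneg (α := ℝ)]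

end ClusterSizeRange

section ClusterAsymptotics

variable {p : ℕ → I} {a θ d : ℝ}

theorem tendsto_hasSparseClusterOfSize_log (hd : 0 < d)
    (h : ∀ᶠ N in atTop, SparseClusterDecay (Fin N) (p N) a θ d) :
    Tendsto (fun N : ℕ => G(Fin N, p N).real {G | HasSparseClusterOfSize G θ
      (Finset.powersetCard 1 Finset.univ) (3 / d * Real.log N) (a * N)}) atTop (nhds 0) := by
  refine squeeze_zero' (.of_forall fun _ => measureReal_nonneg) ?_
    (tendsto_const_div_atTop_nhds_zero_nat 2)
  filter_upwards [h, eventually_ge_atTop 1] with N hN hN₁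
  have hN₁' : (1 : ℝ) ≤ N := Nat.one_le_cast.2 hN₁
  have hbound := hN.hasSparseClusterOfSize_le hd.le (Finset.powersetCard 1 Finset.univ)
    (3 / d * Real.log N)
  have hexp : Real.exp (-(d * (3 / d * Real.log N))) = ((N : ℝ) ^ 3)⁻¹ := by
    rw [← mul_assoc, mul_div_cancel₀ _ hd.ne', Real.exp_neg, mul_comm, Real.exp_mul,
      Real.exp_log (by positivity)]
    norm_cast
  simp only [Fintype.card_fin, Finset.card_powersetCard, Finset.card_univ, Nat.choose_one_right,
    hexp] at hbound
  refine hbound.trans ?_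
  rw [← div_eq_mul_inv, div_le_div_iff₀ (by positivity) (by positivity)]
  nlinarith [mul_nonneg (sq_nonneg (N : ℝ)) (sub_nonneg.2 hN₁')]

theorem tendsto_mul_exp_neg_mul_atTop {c : ℝ} (hc : 0 < c) :
    Tendsto (fun N : ℕ => (N + 1 : ℝ) * Real.exp (-(c * N))) atTop (nhds 0) := by
  have hcN : Tendsto (fun N : ℕ => c * (N : ℝ)) atTop atTop :=
    tendsto_natCast_atTop_atTop.const_mul_atTop hc
  have hlinear := ((Real.tendsto_pow_mul_exp_neg_atTop_nhds_zero 1).comp hcN).const_mul c⁻¹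
  have hsum := hlinear.add (Real.tendsto_exp_neg_atTop_nhds_zero.comp hcN)
  rw [mul_zero, add_zero] at hsum
  refine hsum.congr fun N => ?_
  simp only [Function.comp, pow_one]
  field_simp

theorem exists_tendsto_hasSparseClusterOfSize_linear {μ : ℝ} (hμ : 0 < μ) (hd : 0 < d)
    (h : ∀ᶠ N in atTop, SparseClusterDecay (Fin N) (p N) a θ d) :
    ∃ τ > (0 : ℝ), Tendsto (fun N : ℕ => G(Fin N, p N).real {G | HasSparseClusterOfSize G θ
      {R | #R ≤ τ * N} (μ * N) (a * N)}) atTop (nhds 0) := by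
  obtain ⟨τ, hτ, hcard⟩ := exists_card_filter_card_le_le_exp (by positivity : 0 < d * μ / 2)
  refine ⟨τ, hτ, squeeze_zero' (.of_forall fun _ => measureReal_nonneg) ?_
    (tendsto_mul_exp_neg_mul_atTop (by positivity : 0 < d * μ / 2))⟩
  filter_upwards [h] with N hN
  have hbound := hN.hasSparseClusterOfSize_le hd.le {R | #R ≤ τ * N} (μ * N)
  have hroots := hcard (Fin N)
  rw [Fintype.card_fin] at hbound hroots
  calc G(Fin N, p N).real {G | HasSparseClusterOfSize G θ {R | #R ≤ τ * N} (μ * N) (a * N)}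
    _ ≤ #{R : Finset (Fin N) | #R ≤ τ * N} * (N + 1) * Real.exp (-(d * (μ * N))) := hbound
    _ ≤ Real.exp (d * μ / 2 * N) * (N + 1) * Real.exp (-(d * (μ * N))) := by gcongr
    _ = (N + 1) * Real.exp (-(d * μ / 2 * N)) := by
      rw [mul_comm (Real.exp _), mul_assoc, ← Real.exp_add]
      ring_nf

theorem tendsto_binomialRandom_singleton_bot (ha₀ : 0 < a) (ha₁ : a ≤ 1) (hθ : 0 ≤ θ) (hd : 0 < d)
    (h : ∀ᶠ N in atTop, SparseClusterDecay (Fin N) (p N) a θ d) :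
    Tendsto (fun N : ℕ => G(Fin N, p N).real {⊥}) atTop (nhds 0) := by
  have hfloor : Tendsto (fun N : ℕ => d * (⌊a * N⌋₊ : ℝ)) atTop atTop :=
    (tendsto_natCast_atTop_atTop.comp (tendsto_nat_floor_atTop.comp
      (tendsto_natCast_atTop_atTop.const_mul_atTop ha₀))).const_mul_atTop hd
  refine squeeze_zero' (.of_forall fun _ => measureReal_nonneg) ?_
    (Real.tendsto_exp_neg_atTop_nhds_zero.comp hfloor)
  filter_upwards [h] with N hN
  have haN : ⌊a * N⌋₊ ≤ a * N := Nat.floor_le (by positivity)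
  have hcard : ⌊a * N⌋₊ ≤ #(Finset.univ : Finset (Fin N)) := by
    rw [Finset.card_univ, Fintype.card_fin]
    exact_mod_cast haN.trans (mul_le_of_le_one_left N.cast_nonneg ha₁)
  obtain ⟨R, -, hR⟩ := Finset.exists_subset_card_eq hcard
  refine (measureReal_mono ?_).trans (hN R ⌊a * N⌋₊ (by rwa [Fintype.card_fin]))
  rintro _ rfl
  refine ⟨R, subset_rfl, hR, fun v hv => ⟨v, hv, .nil, by simpa using hv⟩, ?_⟩
  simpa [crossCount] using by positivity

end ClusterAsymptotics

section Components

variable {V : Type*} {G H : SimpleGraph V}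

theorem supp_inter_support_nonempty {c : G.ConnectedComponent} {C : (G ⊔ H).ConnectedComponent}
    (hcC : c.supp ⊂ C.supp) : (c.supp ∩ H.support).Nonempty := by
  obtain ⟨hsub, y, hyC, hyc⟩ := Set.ssubset_iff_exists.1 hcC
  obtain ⟨x, hx⟩ := c.nonempty_supp
  obtain ⟨w⟩ := C.reachable_of_mem_supp (hsub hx) hyC
  obtain ⟨e, -, hfst, hsnd⟩ := w.exists_boundary_dart c.supp hx hyc
  obtain hG | hH := e.adj
  · exact absurd (c.mem_supp_of_adj_mem_supp hfst hG) hsnd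
  · exact ⟨e.fst, hfst, hH.mem_support_left⟩

variable [Fintype V]

theorem card_filter_connectedComponentMk_mem (𝒰 : Finset G.ConnectedComponent) :
    #{v | G.connectedComponentMk v ∈ 𝒰} = ∑ c ∈ 𝒰, c.supp.ncard := by
  rw [Finset.card_eq_sum_card_fiberwise (f := G.connectedComponentMk) (t := 𝒰)
    fun v hv => by simpa using hv]
  refine Finset.sum_congr rfl fun c hc => ?_
  rw [← Set.ncard_coe_finset]
  congr 1
  ext v
  simp +contextual [hc]

theorem isRooted_filter_connectedComponentMk {𝒰 : Finset G.ConnectedComponent} {R : Finset V}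
    (h𝒰 : ∀ c ∈ 𝒰, ∃ r ∈ R, r ∈ c.supp) : IsRooted G {v | G.connectedComponentMk v ∈ 𝒰} R := by
  intro v hv
  have hv := (Finset.mem_filter.1 hv).2
  obtain ⟨r, hr, hrv⟩ := h𝒰 _ hv
  rw [SimpleGraph.ConnectedComponent.mem_supp_iff] at hrv
  obtain ⟨w⟩ := SimpleGraph.ConnectedComponent.exact hrv
  refine ⟨r, hr, w.reverse, fun x hx => ?_⟩
  have hrx : G.Reachable r x := (w.takeUntil x (by simpa using hx)).reachable
  simpa [← SimpleGraph.ConnectedComponent.sound hrx, hrv] using hv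

theorem exists_hasSparseCluster_sup [DecidableEq V] {𝒰 : Finset G.ConnectedComponent} {θ : ℝ}
    (h𝒰 : ∀ c ∈ 𝒰, (c.supp ∩ H.support).Nonempty)
    (hθ : H.edgeSet.ncard ≤ θ * (∑ c ∈ 𝒰, c.supp.ncard : ℕ)) :
    ∃ R, #R ≤ 2 * H.edgeSet.ncard ∧ HasSparseCluster (G ⊔ H) θ R (∑ c ∈ 𝒰, c.supp.ncard) := by
  let U : Finset V := {v | G.connectedComponentMk v ∈ 𝒰}
  let R : Finset V := {v ∈ U | v ∈ H.support}
  have hU : crossCount G U ≤ 0 := by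
    refine (crossCount_le_card_interedges (Y := ∅) fun v hv w hvw => ?_).trans_eq
      (by simp [SimpleGraph.interedges, Rel.interedges])
    simpa [U, ← SimpleGraph.ConnectedComponent.connectedComponentMk_eq_of_adj hvw] using hv
  have hcross : crossCount (G ⊔ H) U ≤ H.edgeSet.ncard := by
    have := crossCount_sup_le G H U
    have := crossCount_le_ncard_edgeSet H U
    omega
  have hR : #R ≤ 2 * H.edgeSet.ncard := by
    rw [← Set.ncard_coe_finset]
    exact (Set.ncard_le_ncard fun v hv => (Finset.mem_filter.1 hv).2).trans (ncard_support_le H)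
  have hrooted : IsRooted G U R := isRooted_filter_connectedComponentMk fun c hc => by
    obtain ⟨r, hrc, hrH⟩ := h𝒰 c hc
    rw [SimpleGraph.ConnectedComponent.mem_supp_iff] at hrc
    exact ⟨r, by simp [R, U, hrc, hc, hrH], hrc⟩
  exact ⟨R, hR, U, Finset.filter_subset _ _, card_filter_connectedComponentMk_mem 𝒰,
    hrooted.mono le_sup_left, (Nat.cast_le.2 hcross).trans hθ⟩

theorem exists_subset_sum_mem_Icc {ι : Type*} {s : Finset ι} {f : ι → ℝ} {m : ℝ} (hm : 0 ≤ m)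
    (hf : ∀ i ∈ s, f i ≤ m) (hs : m ≤ ∑ i ∈ s, f i) :
    ∃ t ⊆ s, ∑ i ∈ t, f i ∈ Set.Icc m (2 * m) := by
  induction s using Finset.induction_on with
  | empty => exact ⟨∅, subset_rfl, hs, by simpa⟩
  | insert a s ha ih =>
    by_cases hms : m ≤ ∑ i ∈ s, f i
    · obtain ⟨t, hts, ht⟩ := ih (fun i hi => hf i (Finset.mem_insert_of_mem hi)) hms
      exact ⟨t, hts.trans (Finset.subset_insert a s), ht⟩
    · refine ⟨insert a s, subset_rfl, hs, ?_⟩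
      rw [Finset.sum_insert ha]
      linarith [hf a (Finset.mem_insert_self a s)]

end Components

section BalancedCuts

variable {V : Type*} {G H : SimpleGraph V} {X Y : Finset V} {m k θ : ℝ}

/-- Some component of `G` splits into two parts of at least `m` vertices each, with at most `k`
edges between them. -/
def HasBalancedCut [DecidableEq V] (G : SimpleGraph V) (m k : ℝ) : Prop :=
  ∃ (C : G.ConnectedComponent) (X Y : Finset V), Disjoint X Y ∧ (↑(X ∪ Y) : Set V) = C.supp ∧
    m ≤ #X ∧ m ≤ #Y ∧ #(G.interedges X Y) ≤ k

theorem le_card_filter_le_ncard_supp [Finite V] {C : H.ConnectedComponent}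
    {𝒮 : Finset G.ConnectedComponent} (hGH : G ≤ H)
    (h𝒮 : ∀ c : G.ConnectedComponent, c.supp ⊆ C.supp → c.supp.ncard < m → c ∈ 𝒮)
    (hsum : ∑ c ∈ 𝒮, (c.supp.ncard : ℝ) < m) (hX : ↑X ⊆ C.supp) (hm : 2 * m ≤ #X) :
    m ≤ #{v ∈ X | m ≤ (G.connectedComponentMk v).supp.ncard} := by
  have := Fintype.ofFinite V
  have hsmall : #{v ∈ X | ¬m ≤ (G.connectedComponentMk v).supp.ncard} < m := by
    refine lt_of_le_of_lt ?_ hsum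
    rw [← Nat.cast_sum, ← card_filter_connectedComponentMk_mem]
    refine Nat.cast_le.2 (Finset.card_le_card fun v hv => ?_)
    obtain ⟨hvX, hvm⟩ := Finset.mem_filter.1 hv
    simpa using h𝒮 _ (C.connectedComponentMk_supp_subset_supp hGH (hX hvX)) (not_le.1 hvm)
  have := X.card_filter_add_card_filter_not fun v => m ≤ (G.connectedComponentMk v).supp.ncard
  rify at this
  linarith

variable [Fintype V]

/-- The sets inside the components of `G` with at least `m` vertices that have at most `k` boundary
edges. -/
def largeSparseSets [DecidableEq V] (G : SimpleGraph V) (m k : ℝ) : Finset (Finset V) :=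
  {X | (∀ v ∈ X, m ≤ (G.connectedComponentMk v).supp.ncard) ∧ crossCount G X ≤ k}

theorem filter_mem_largeSparseSets [DecidableEq V] (h : ∀ v ∈ X, ∀ w, G.Adj v w → w ∈ X ∪ Y)
    (hk : #(G.interedges X Y) ≤ k) :
    {v ∈ X | m ≤ (G.connectedComponentMk v).supp.ncard} ∈ largeSparseSets G m k := by
  have hcross : crossCount G {v ∈ X | m ≤ (G.connectedComponentMk v).supp.ncard} ≤
      #(G.interedges X Y) := by
    refine (crossCount_le_card_interedges (Y := Y) fun v hv w hvw => ?_).trans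
      (card_interedges_mono le_rfl (Finset.filter_subset _ _) subset_rfl)
    obtain ⟨hvX, hvm⟩ := Finset.mem_filter.1 hv
    rw [SimpleGraph.ConnectedComponent.connectedComponentMk_eq_of_adj hvw] at hvm
    have hw := h v hvX w hvw
    simp only [Finset.mem_union, Finset.mem_filter] at hw ⊢
    tauto
  simp only [largeSparseSets, Finset.mem_filter, Finset.mem_univ, true_and]
  exact ⟨fun v hv => hv.2, (Nat.cast_le.2 hcross).trans hk⟩

theorem hasSparseClusterOfSize_sup_of_le_sum [DecidableEq V] {C : (G ⊔ H).ConnectedComponent}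
    {𝒮 : Finset G.ConnectedComponent} (h𝒮 : ∀ c ∈ 𝒮, c.supp ⊂ C.supp)
    (hm𝒮 : ∀ c ∈ 𝒮, c.supp.ncard ≤ m) (hm : 0 ≤ m) (hsum : m ≤ ∑ c ∈ 𝒮, (c.supp.ncard : ℝ))
    (hθ : 0 ≤ θ) (hH : H.edgeSet.ncard ≤ θ * m) :
    HasSparseClusterOfSize (G ⊔ H) θ {R | #R ≤ 2 * H.edgeSet.ncard} m (2 * m) := by
  obtain ⟨𝒰, h𝒰𝒮, hle, hle'⟩ := exists_subset_sum_mem_Icc hm hm𝒮 hsum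
  rw [← Nat.cast_sum] at hle hle'
  obtain ⟨R, hR, hcluster⟩ := exists_hasSparseCluster_sup (θ := θ)
    (fun c hc => supp_inter_support_nonempty (h𝒮 c (h𝒰𝒮 hc)))
    (hH.trans (mul_le_mul_of_nonneg_left hle hθ))
  exact ⟨R, by simpa using hR, _, hle, hle', hcluster⟩

theorem HasBalancedCut.hasSparseClusterOfSize_or_exists_largeSparseSets [DecidableEq V]
    (hm : 0 ≤ m) (hθ : 0 ≤ θ) (hH : H.edgeSet.ncard ≤ θ * m)
    (h : HasBalancedCut (G ⊔ H) (2 * m) k) :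
    HasSparseClusterOfSize (G ⊔ H) θ {R | #R ≤ 2 * H.edgeSet.ncard} m (2 * m) ∨
      ∃ X ∈ largeSparseSets G m k, ∃ Y ∈ largeSparseSets G m k,
        Disjoint X Y ∧ m ≤ #X ∧ m ≤ #Y ∧ #(H.interedges X Y) ≤ k := by
  obtain ⟨C, X, Y, hXY, hC, hX, hY, hcut⟩ := h
  have hXC : ↑X ⊆ C.supp := hC ▸ Finset.coe_subset.2 Finset.subset_union_left
  have hYC : ↑Y ⊆ C.supp := hC ▸ Finset.coe_subset.2 Finset.subset_union_right
  let 𝒮 : Finset G.ConnectedComponent := {c | c.supp ⊆ C.supp ∧ c.supp.ncard < m}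
  let large (Z : Finset V) : Finset V := {v ∈ Z | m ≤ (G.connectedComponentMk v).supp.ncard}
  obtain hsum | hsum := le_or_gt m (∑ c ∈ 𝒮, (c.supp.ncard : ℝ))
  · refine .inl (hasSparseClusterOfSize_sup_of_le_sum (C := C) (fun c hc => ?_)
      (fun c hc => (Finset.mem_filter.1 hc).2.2.le) hm hsum hθ hH)
    obtain ⟨hcC, hcm⟩ := (Finset.mem_filter.1 hc).2
    refine hcC.ssubset_of_ne fun heq => ?_
    have : (#X : ℝ) ≤ C.supp.ncard := by
      exact_mod_cast Set.ncard_coe_finset X ▸ Set.ncard_le_ncard hXC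
    rw [heq] at hcm
    linarith
  · have hclosed : ∀ v ∈ C.supp, ∀ w, G.Adj v w → w ∈ X ∪ Y := fun v hv w hvw => by
      rw [← Finset.mem_coe, hC]
      exact C.mem_supp_of_adj_mem_supp hv (.inl hvw)
    have hcut_le {G' : SimpleGraph V} {X' Y' : Finset V} (hG' : G' ≤ G ⊔ H) (hX' : X' ⊆ X)
        (hY' : Y' ⊆ Y) : (#(G'.interedges X' Y') : ℝ) ≤ k :=
      (Nat.cast_le.2 (card_interedges_mono hG' hX' hY')).trans hcut
    have hlarge {Z : Finset V} (hZ : ↑Z ⊆ C.supp) (hmZ : 2 * m ≤ #Z) : m ≤ #(large Z) :=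
      le_card_filter_le_ncard_supp le_sup_left
        (fun c hcC hcm => Finset.mem_filter.2 ⟨Finset.mem_univ c, hcC, hcm⟩) hsum hZ hmZ
    refine .inr ⟨large X, filter_mem_largeSparseSets (Y := Y)
        (fun v hv => hclosed v (hXC hv)) (hcut_le le_sup_left subset_rfl subset_rfl),
      large Y, filter_mem_largeSparseSets (Y := X) (fun v hv => ?_) ?_,
      hXY.mono (Finset.filter_subset _ _) (Finset.filter_subset _ _), hlarge hXC hX, hlarge hYC hY,
      hcut_le le_sup_right (Finset.filter_subset _ _) (Finset.filter_subset _ _)⟩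
    · simpa only [Finset.union_comm] using hclosed v (hYC hv)
    · have := G.symm
      rw [SimpleGraph.interedges, Rel.card_interedges_comm]
      exact hcut_le le_sup_left subset_rfl subset_rfl

end BalancedCuts

section CountLargeSparseSets

variable {V : Type*} [Fintype V] {G : SimpleGraph V} {S S' : Finset V} {m k : ℝ}

theorem card_filter_le_ncard_supp_mul_le (G : SimpleGraph V) (m : ℝ) :
    #{c : G.ConnectedComponent | m ≤ c.supp.ncard} * m ≤ Fintype.card V :=
  calc #{c : G.ConnectedComponent | m ≤ c.supp.ncard} * m
      ≤ ∑ c : G.ConnectedComponent with m ≤ c.supp.ncard, (c.supp.ncard : ℝ) := by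
        rw [← nsmul_eq_mul]
        exact Finset.card_nsmul_le_sum _ _ _ fun c hc => (Finset.mem_filter.1 hc).2
    _ ≤ Fintype.card V := by
        rw [← Nat.cast_sum, ← card_filter_connectedComponentMk_mem]
        exact Nat.cast_le.2 (Finset.card_le_univ _)

theorem mem_iff_mem_of_reachable [DecidableEq V]
    (hcut : {e ∈ pairsBetween S Sᶜ | e ∈ G.edgeSet} = {e ∈ pairsBetween S' S'ᶜ | e ∈ G.edgeSet})
    {v w : V} (hvw : G.Reachable v w) (hv : v ∈ S ↔ v ∈ S') : w ∈ S ↔ w ∈ S' := by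
  obtain ⟨p⟩ := hvw
  induction p with
  | nil => exact hv
  | @cons v x _ hvx _ ih =>
    have := congrArg (s(v, x) ∈ ·) hcut
    simp only [Finset.mem_filter, SimpleGraph.mem_edgeSet, hvx, and_true,
      mk_mem_pairsBetween_compl] at this
    exact ih (by grind)

-- A set is recovered from its boundary edges and the components whose representative it contains.
theorem card_largeSparseSets_le [DecidableEq V] (G : SimpleGraph V) (m k : ℝ) :
    #(largeSparseSets G m k) ≤
      #{F : Finset (Sym2 V) | #F ≤ k} * 2 ^ #{c : G.ConnectedComponent | m ≤ c.supp.ncard} := by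
  rw [← Finset.card_powerset, ← Finset.card_product]
  refine Finset.card_le_card_of_injOn (fun X => ({e ∈ pairsBetween X Xᶜ | e ∈ G.edgeSet},
    ({c | m ≤ c.supp.ncard ∧ c.out ∈ X} : Finset G.ConnectedComponent)))
    (fun X hX => ?_) fun X hX Y hY hXY => ?_
  · have hX := (Finset.mem_filter.1 hX).2.2
    simp only [Finset.coe_product, Set.mem_prod, Finset.mem_coe, Finset.mem_filter,
      Finset.mem_univ, true_and, Finset.mem_powerset, card_filter_pairsBetween_compl]
    exact ⟨hX, Finset.monotone_filter_right _ fun c _ hc => hc.1⟩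
  · obtain ⟨hcut, hout⟩ := Prod.ext_iff.1 hXY
    have key (v : V) (hv : m ≤ (G.connectedComponentMk v).supp.ncard) : v ∈ X ↔ v ∈ Y := by
      refine mem_iff_mem_of_reachable hcut (SimpleGraph.ConnectedComponent.exact
        (G.connectedComponentMk v).out_eq) ?_
      simpa [hv] using congrArg (G.connectedComponentMk v ∈ ·) hout
    ext v
    exact ⟨fun hv => (key v ((Finset.mem_filter.1 hX).2.1 v hv)).1 hv,
      fun hv => (key v ((Finset.mem_filter.1 hY).2.1 v hv)).2 hv⟩

end CountLargeSparseSets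

section Sprinkling

variable {V : Type*} {p q r : I}

theorem exists_symm_eq_symm_mul_symm (hqr : q ≤ r) : ∃ p : I, σ r = σ p * σ q := by
  have hle : (σ r : ℝ) ≤ σ q := unitInterval.symm_le_symm.2 hqr
  refine ⟨σ ⟨σ r / σ q, div_nonneg (σ r).2.1 (σ q).2.1, div_le_one_of_le₀ hle (σ q).2.1⟩,
    Subtype.ext ?_⟩
  rw [unitInterval.symm_symm, Set.Icc.coe_mul]
  exact (div_mul_cancel_of_imp fun h => le_antisymm (h ▸ hle) (σ r).2.1).symm

theorem binomialRandom_card_interedges_le [Finite V] {X Y : Finset V} (hXY : Disjoint X Y)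
    (p : I) (k : ℝ) :
    G(V, p).real {G | #(G.interedges X Y) ≤ k} ≤ 2 ^ k * Real.exp (-(p / 2 * (#X * #Y))) := by
  have hp₁ := p.2.2
  have hbound := binomialRandom_subset_edgeSet_and_card_le (F := ∅) (by simp)
    (pairsBetween_subset_compl_diagSet hXY) (Finset.disjoint_empty_left _) p
    (z := 1 / 2) (by norm_num) (by norm_num) k
  simp only [Finset.coe_empty, Set.empty_subset, true_and, card_filter_pairsBetween _ hXY,
    card_pairsBetween hXY, Finset.card_empty, pow_zero, mul_one] at hbound
  refine hbound.trans (mul_le_mul (by simp [Real.rpow_neg, Real.inv_rpow]) ?_ ?_ (by positivity))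
  · have := one_add_pow_le_exp (x := -(p / 2)) (by linarith) (#X * #Y)
    push_cast at this
    calc _ = (1 + -(p / 2 : ℝ)) ^ (#X * #Y) := by ring
      _ ≤ _ := this.trans_eq (by ring_nf)
  · have : 0 ≤ 1 - (p : ℝ) * (1 - 1 / 2) := by linarith
    positivity

theorem binomialRandom_real_le_of_sup [Finite V] (hqr : q ≤ r) {A : Set (SimpleGraph V)} {c : ℝ}
    (h : ∀ G, G(V, q).real {H | G ⊔ H ∈ A} ≤ c) : G(V, r).real A ≤ c := by
  obtain ⟨p, hp⟩ := exists_symm_eq_symm_mul_symm hqr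
  have hc : 0 ≤ c := measureReal_nonneg.trans (h ⊥)
  rw [← binomialRandom_map_sup hp, map_measureReal_apply .of_discrete .of_discrete,
    measureReal_def, Measure.prod_apply .of_discrete]
  refine ENNReal.toReal_le_of_le_ofReal hc ((lintegral_mono fun G => ?_).trans_eq
    (lintegral_const (ENNReal.ofReal c) |>.trans (by simp)))
  exact (ENNReal.le_ofReal_iff_toReal_le (measure_ne_top _ _) hc).2 (h G)

variable [Fintype V] {η : ℝ}

theorem binomialRandom_lt_ncard_edgeSet_le_exp (hq : (q : ℝ) * Fintype.card V = η) :
    G(V, q).real {G | η * Fintype.card V < G.edgeSet.ncard} ≤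
      Real.exp (-(η / 8 * Fintype.card V)) := by
  set n := Fintype.card V
  have hq₀ := q.2.1
  have hη : 0 ≤ η := hq ▸ by positivity
  have hpairs : (n.choose 2 : ℝ) * q ≤ η * n / 2 := by
    rw [Nat.cast_choose_two, ← hq]
    nlinarith [mul_nonneg hq₀ n.cast_nonneg (α := ℝ)]
  calc G(V, q).real {G | η * n < G.edgeSet.ncard}
    _ ≤ 2 ^ (-(η * n)) * (1 + q : ℝ) ^ n.choose 2 := binomialRandom_lt_ncard_edgeSet_le q _
    _ ≤ Real.exp (Real.log 2 * -(η * n)) * Real.exp (η * n / 2) := by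
      rw [Real.rpow_def_of_pos two_pos]
      gcongr
      exact (one_add_pow_le_exp (by linarith) _).trans (Real.exp_le_exp.2 hpairs)
    _ ≤ Real.exp (-(η / 8 * n)) := by
      rw [← Real.exp_add, Real.exp_le_exp]
      nlinarith [Real.log_two_gt_d9, mul_nonneg hη n.cast_nonneg (α := ℝ)]

variable [DecidableEq V] {m k μ θ τ : ℝ}

theorem binomialRandom_exists_largeSparseSets_le (G : SimpleGraph V) (p : I) (hm : 0 ≤ m) (k : ℝ) :
    G(V, p).real {H | ∃ X ∈ largeSparseSets G m k, ∃ Y ∈ largeSparseSets G m k,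
      Disjoint X Y ∧ m ≤ #X ∧ m ≤ #Y ∧ #(H.interedges X Y) ≤ k} ≤
      #(largeSparseSets G m k) ^ 2 * (2 ^ k * Real.exp (-(p / 2 * m ^ 2))) := by
  let pairs : Finset (Finset V × Finset V) := {x ∈ largeSparseSets G m k ×ˢ largeSparseSets G m k |
    Disjoint x.1 x.2 ∧ m ≤ #x.1 ∧ m ≤ #x.2}
  have hsub : {H : SimpleGraph V | ∃ X ∈ largeSparseSets G m k, ∃ Y ∈ largeSparseSets G m k,
      Disjoint X Y ∧ m ≤ #X ∧ m ≤ #Y ∧ #(H.interedges X Y) ≤ k} ⊆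
      ⋃ x ∈ pairs, {H | #(H.interedges x.1 x.2) ≤ k} := by
    rintro H ⟨X, hX, Y, hY, hXY, hmX, hmY, hk⟩
    exact Set.mem_biUnion (x := (X, Y)) (by simp [pairs, *]) hk
  refine (measureReal_le_card_mul_of_subset_biUnion hsub fun x hx => ?_).trans
    (mul_le_mul_of_nonneg_right (b := (#pairs : ℝ)) ?_ (by positivity))
  · obtain ⟨-, hdisj, hmX, hmY⟩ := Finset.mem_filter.1 hx
    have hp := p.2.1
    refine (binomialRandom_card_interedges_le hdisj p k).trans ?_
    rw [sq]
    gcongr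
  · exact_mod_cast (Finset.card_filter_le _ _).trans_eq (by rw [Finset.card_product, sq])

theorem card_largeSparseSets_le_exp (G : SimpleGraph V) (hμ : 0 < μ) (hV : 0 < Fintype.card V)
    (k : ℝ) : #(largeSparseSets G (μ * Fintype.card V) k) ≤
      Real.exp (1 + 2 * k * Real.log (Fintype.card V) + 1 / μ) := by
  set n := Fintype.card V
  have hn : (1 : ℝ) ≤ n := Nat.one_le_cast.2 hV
  have hedges : #{F : Finset (Sym2 V) | #F ≤ k} ≤ Real.exp 1 * Real.exp (2 * k * Real.log n) := by
    refine (card_filter_card_le_le (x := 1 / (n : ℝ) ^ 2) (by positivity)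
      (div_le_one_of_le₀ (one_le_pow₀ hn) (by positivity)) k).trans
      (mul_le_mul ?_ ?_ (by positivity) (by positivity))
    · have hSym2 : Fintype.card (Sym2 V) ≤ n * n := by
        simpa using Fintype.card_le_of_surjective _ (Sym2.mk_surjective (α := V))
      refine (one_add_pow_le_exp (by linarith [show 0 ≤ 1 / (n : ℝ) ^ 2 by positivity]) _).trans ?_
      rw [Real.exp_le_exp, mul_one_div]
      exact div_le_one_of_le₀ (by exact_mod_cast hSym2.trans_eq (sq n).symm) (by positivity)
    · rw [Real.rpow_def_of_pos (by positivity), one_div, Real.log_inv, Real.log_pow]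
      exact Real.exp_le_exp.2 (by push_cast; linarith)
  have hcomponents : (2 : ℝ) ^ #{c : G.ConnectedComponent | μ * n ≤ c.supp.ncard} ≤
      Real.exp (1 / μ) := by
    have hcard : #{c : G.ConnectedComponent | μ * n ≤ c.supp.ncard} * (μ * n) ≤ n := by
      convert card_filter_le_ncard_supp_mul_le G (μ * n)
    rw [← mul_assoc, mul_le_iff_le_one_left (by positivity), ← le_div_iff₀ hμ] at hcard
    calc (2 : ℝ) ^ #{c : G.ConnectedComponent | μ * n ≤ c.supp.ncard}
      _ ≤ Real.exp (#{c : G.ConnectedComponent | μ * n ≤ c.supp.ncard} * 1) := by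
        simpa only [one_add_one_eq_two] using one_add_pow_le_exp (x := 1) (by norm_num) _
      _ ≤ Real.exp (1 / μ) := by rwa [Real.exp_le_exp, mul_one]
  refine (Nat.cast_le.2 (card_largeSparseSets_le G _ k)).trans ?_
  rw [Real.exp_add, Real.exp_add, Nat.cast_mul, Nat.cast_pow, Nat.cast_ofNat]
  gcongr

theorem binomialRandom_hasBalancedCut_diff_le (hqr : q ≤ r) (hq : (q : ℝ) * Fintype.card V = η)
    (hη : 2 * η ≤ τ) (hηθ : η ≤ θ * μ) (hμ : 0 < μ) (hθ : 0 ≤ θ) (hV : 0 < Fintype.card V) (k : ℝ) :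
    G(V, r).real ({G | HasBalancedCut G (2 * (μ * Fintype.card V)) k} \
      {G | HasSparseClusterOfSize G θ {R | #R ≤ τ * Fintype.card V} (μ * Fintype.card V)
        (2 * (μ * Fintype.card V))}) ≤
      Real.exp (1 + 2 * k * Real.log (Fintype.card V) + 1 / μ) ^ 2 *
        (2 ^ k * Real.exp (-(η * μ ^ 2 / 2 * Fintype.card V))) +
      Real.exp (-(η / 8 * Fintype.card V)) := by
  set n := Fintype.card V
  refine binomialRandom_real_le_of_sup hqr fun G => ?_
  let IsBadSprinkling (H : SimpleGraph V) : Prop :=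
    ∃ X ∈ largeSparseSets G (μ * n) k, ∃ Y ∈ largeSparseSets G (μ * n) k,
      Disjoint X Y ∧ μ * n ≤ #X ∧ μ * n ≤ #Y ∧ #(H.interedges X Y) ≤ k
  have hbad : G(V, q).real {H | IsBadSprinkling H} ≤
      Real.exp (1 + 2 * k * Real.log n + 1 / μ) ^ 2 *
        (2 ^ k * Real.exp (-(η * μ ^ 2 / 2 * n))) := by
    refine (binomialRandom_exists_largeSparseSets_le G q (by positivity) k).trans ?_
    rw [show (q / 2 * (μ * n) ^ 2 : ℝ) = η * μ ^ 2 / 2 * n by rw [← hq]; ring]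
    gcongr
    exact card_largeSparseSets_le_exp G hμ hV k
  refine ((measureReal_mono ?_).trans (measureReal_union_le {H | IsBadSprinkling H} _)).trans
    (add_le_add hbad (binomialRandom_lt_ncard_edgeSet_le_exp hq))
  rintro H ⟨hcut, hcluster⟩
  by_contra hgood
  simp only [Set.mem_union, Set.mem_ofPred_eq, not_or, not_lt] at hgood hcluster
  obtain ⟨hH, hfew⟩ := hgood
  have hHθ : H.edgeSet.ncard ≤ θ * (μ * n) :=
    hfew.trans (by rw [← mul_assoc]; gcongr)
  obtain hsparse | hexists := hcut.hasSparseClusterOfSize_or_exists_largeSparseSets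
    (by positivity) hθ hHθ
  · obtain ⟨R, hR, hsparse⟩ := hsparse
    have hR : (#R : ℝ) ≤ 2 * H.edgeSet.ncard := by exact_mod_cast (Finset.mem_filter.1 hR).2
    have hτ : #R ≤ τ * n := by nlinarith [mul_le_mul_of_nonneg_right hη n.cast_nonneg (α := ℝ)]
    exact hcluster ⟨R, by simpa using hτ, hsparse⟩
  · exact hH hexists

end Sprinkling

section BalancedCutLimit

variable {p : ℕ → I} {a θ d b : ℝ}

theorem eventually_exp_sq_mul_le_exp {c : ℝ} (hc : 0 < c) (M : ℝ) :
    ∀ᶠ N : ℕ in atTop, Real.exp (1 + 2 * (N / Real.log N ^ 2) * Real.log N + M) ^ 2 *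
      (2 ^ (N / Real.log N ^ 2) * Real.exp (-(2 * c * N))) ≤
        Real.exp (2 * (1 + M)) * Real.exp (-(c * N)) := by
  have hlog := Real.tendsto_log_atTop.comp (tendsto_natCast_atTop_atTop (R := ℝ))
  filter_upwards [hlog.eventually_ge_atTop 1, hlog.eventually_ge_atTop (5 / c)] with N h₁ hcN
  simp only [Function.comp_apply] at h₁ hcN
  have hlog_pos : 0 < Real.log N := one_pos.trans_le h₁
  have hlinear : 5 * (N / Real.log N) ≤ c * N := by
    rw [div_le_iff₀ hc] at hcN
    rw [← mul_div_assoc, div_le_iff₀ hlog_pos]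
    nlinarith [N.cast_nonneg (α := ℝ)]
  have hk : N / Real.log N ^ 2 * Real.log N = N / Real.log N := by field_simp
  have hk₀ : 0 ≤ N / Real.log N ^ 2 := by positivity
  rw [Real.rpow_def_of_pos two_pos, sq, ← Real.exp_add, ← Real.exp_add, ← Real.exp_add,
    ← Real.exp_add, Real.exp_le_exp]
  nlinarith [Real.log_two_lt_d9]

theorem tendsto_hasBalancedCut (ha : 0 < a) (hθ : 0 < θ) (hd : 0 < d) (hb : 0 < b)
    (hp : ∀ᶠ N in atTop, b ≤ p N * N) (h : ∀ᶠ N in atTop, SparseClusterDecay (Fin N) (p N) a θ d) :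
    Tendsto (fun N : ℕ => G(Fin N, p N).real {G | HasBalancedCut G (a * N) (N / Real.log N ^ 2)})
      atTop (nhds 0) := by
  set μ := a / 2
  have hμ : 0 < μ := half_pos ha
  obtain ⟨τ, hτ, hcluster⟩ := exists_tendsto_hasSparseClusterOfSize_linear hμ hd h
  obtain ⟨η, hη, hηb, hητ, hηθ⟩ : ∃ η > 0, η ≤ b ∧ 2 * η ≤ τ ∧ η ≤ θ * μ :=
    ⟨min b (min (τ / 2) (θ * μ)), by positivity, by simp, by
      linarith [min_le_right b (min (τ / 2) (θ * μ)), min_le_left (τ / 2) (θ * μ)], by simp⟩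
  have hexp {c : ℝ} (hc : 0 < c) : Tendsto (fun N : ℕ => Real.exp (-(c * N))) atTop (nhds 0) :=
    Real.tendsto_exp_neg_atTop_nhds_zero.comp
      (tendsto_natCast_atTop_atTop.const_mul_atTop hc)
  have hc : 0 < η * μ ^ 2 / 4 := by positivity
  have hlimit := hcluster.add (((hexp hc).const_mul (Real.exp (2 * (1 + 1 / μ)))).add
    (hexp (by positivity : 0 < η / 8)))
  simp only [mul_zero, add_zero] at hlimit
  refine squeeze_zero' (.of_forall fun _ => measureReal_nonneg) ?_ hlimit
  filter_upwards [hp, eventually_exp_sq_mul_le_exp hc (1 / μ), eventually_gt_atTop 0,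
    tendsto_natCast_atTop_atTop.eventually_ge_atTop η] with N hpN hN hN₀ hηN
  have hN₀' : (0 : ℝ) < N := Nat.cast_pos.2 hN₀
  have hq := coe_erParam hη.le hηN
  have hqp : erParam η N ≤ p N := by
    rw [← Subtype.coe_le_coe, hq, div_le_iff₀ hN₀']
    exact hηb.trans hpN
  have hdiff := binomialRandom_hasBalancedCut_diff_le (V := Fin N) hqp (η := η)
    (by rw [hq, Fintype.card_fin, div_mul_cancel₀ _ hN₀'.ne']) hητ hηθ hμ hθ.le (by simpa)
    (N / Real.log N ^ 2)
  simp only [Fintype.card_fin, show 2 * (μ * N) = a * N by ring,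
    show η * μ ^ 2 / 2 = 2 * (η * μ ^ 2 / 4) by ring] at hdiff
  let cut : Set (SimpleGraph (Fin N)) := {G | HasBalancedCut G (a * N) (N / Real.log N ^ 2)}
  let cluster : Set (SimpleGraph (Fin N)) :=
    {G | HasSparseClusterOfSize G θ {R | #R ≤ τ * N} (μ * N) (a * N)}
  calc G(Fin N, p N).real cut ≤ G(Fin N, p N).real (cluster ∪ cut \ cluster) :=
        measureReal_mono (by simp) (measure_ne_top _ _)
    _ ≤ G(Fin N, p N).real cluster + G(Fin N, p N).real (cut \ cluster) :=
        measureReal_union_le _ _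
    _ ≤ _ := add_le_add le_rfl (hdiff.trans (add_le_add hN le_rfl))

end BalancedCutLimit

section Cheeger

variable {V : Type*} {G : SimpleGraph V}

theorem exists_isRooted_singleton {S : Finset V} {x : V} (hx : x ∈ S) :
    ∃ X ⊆ S, x ∈ X ∧ IsRooted G X {x} ∧ ∀ y ∈ X, ∀ z ∈ S, G.Adj y z → z ∈ X := by
  let Joined (y : V) : Prop := ∃ w : G.Walk y x, ∀ z ∈ w.support, z ∈ S
  refine ⟨{y ∈ S | Joined y}, Finset.filter_subset _ _, ?_, ?_, ?_⟩
  · exact Finset.mem_filter.2 ⟨hx, .nil, by simpa⟩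
  · intro y hy
    obtain ⟨w, hw⟩ := (Finset.mem_filter.1 hy).2
    refine ⟨x, Finset.mem_singleton_self x, w, fun z hz => Finset.mem_filter.2 ⟨hw z hz, ?_⟩⟩
    exact ⟨w.dropUntil z hz, fun u hu => hw u (w.support_dropUntil_subset_support hz hu)⟩
  · intro y hy z hz hyz
    obtain ⟨w, hw⟩ := (Finset.mem_filter.1 hy).2
    exact Finset.mem_filter.2 ⟨hz, .cons hyz.symm w, by simpa [hz] using hw⟩

variable [Fintype V] [DecidableEq V]

theorem crossCount_add_crossCount_sdiff_le {S X : Finset V} (hXS : X ⊆ S)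
    (hX : ∀ x ∈ X, ∀ y ∈ S, G.Adj x y → y ∈ X) :
    crossCount G X + crossCount G (S \ X) ≤ crossCount G S := by
  simp only [crossCount_eq_card_interedges]
  rw [← Finset.card_union_of_disjoint]
  · refine Finset.card_le_card fun e => ?_
    simp only [Finset.mem_union, SimpleGraph.mem_interedges_iff, Finset.mem_compl,
      Finset.mem_sdiff, not_and, not_not]
    rintro (⟨h₁, h₂, h⟩ | ⟨⟨h₁, h₁'⟩, h₂, h⟩)
    · exact ⟨hXS h₁, fun h₂S => h₂ (hX _ h₁ _ h₂S h), h⟩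
    · exact ⟨h₁, fun h₂S => h₁' (hX _ (h₂ h₂S) _ h₁ h.symm), h⟩
  · refine Finset.disjoint_left.2 fun e he he' => ?_
    rw [SimpleGraph.mem_interedges_iff] at he he'
    exact (Finset.mem_sdiff.1 he'.1).2 he.1

theorem mul_card_le_crossCount_of_isRooted {S : Finset V} {r : ℝ}
    (h : ∀ X ⊆ S, ∀ x ∈ X, IsRooted G X {x} → r * #X ≤ crossCount G X) :
    r * #S ≤ crossCount G S := by
  induction S using Finset.strongInduction with
  | H S ih =>
    obtain rfl | ⟨x, hx⟩ := S.eq_empty_or_nonempty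
    · simp
    obtain ⟨X, hXS, hxX, hrooted, hclosed⟩ := exists_isRooted_singleton (G := G) hx
    have hX := h X hXS x hxX hrooted
    have hdiff := ih (S \ X) (Finset.sdiff_ssubset hXS ⟨x, hxX⟩)
      fun Y hY => h Y (hY.trans Finset.sdiff_subset)
    have hadd : (crossCount G X + crossCount G (S \ X) : ℝ) ≤ crossCount G S :=
      mod_cast crossCount_add_crossCount_sdiff_le hXS hclosed
    have hcard : (#(S \ X) + #X : ℝ) = #S := mod_cast Finset.card_sdiff_add_card_eq_card hXS
    rw [← hcard]
    linarith

theorem crossCount_induce {s : Set V} [Fintype s] [DecidableEq s]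
    (hs : ∀ v ∈ s, ∀ w, G.Adj v w → w ∈ s) (S : Finset s) :
    crossCount (G.induce s) S = crossCount G (S.map (.subtype (· ∈ s))) := by
  rw [crossCount_eq_card_interedges, crossCount_eq_card_interedges]
  refine Finset.card_bij (fun e _ => (e.1.1, e.2.1)) ?_ ?_ ?_
  · simp +contextual [SimpleGraph.mem_interedges_iff]
  · simp +contextual [Prod.ext_iff, Subtype.ext_iff]
  · rintro ⟨v, w⟩ h
    simp only [SimpleGraph.mem_interedges_iff, Finset.mem_compl, Finset.mem_map,
      Function.Embedding.subtype_apply] at h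
    obtain ⟨⟨v, hv, rfl⟩, hw, hvw⟩ := h
    have hws := hs _ v.2 w hvw
    refine ⟨(v, ⟨w, hws⟩), ?_, rfl⟩
    simp only [SimpleGraph.mem_interedges_iff, Finset.mem_compl]
    exact ⟨hv, fun h => hw ⟨_, h, rfl⟩, hvw⟩

theorem le_cheegerConst_induce {s : Set V} [Fintype s] [DecidableEq s] {r : ℝ}
    (hs : ∀ v ∈ s, ∀ w, G.Adj v w → w ∈ s) (hcard : 2 ≤ s.ncard)
    (h : ∀ X : Finset V, ↑X ⊆ s → 2 * #X ≤ s.ncard → ∀ x ∈ X, IsRooted G X {x} →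
      r * #X ≤ crossCount G X) :
    r ≤ cheegerConst (G.induce s) := by
  rw [Set.ncard_eq_toFinset_card', Set.toFinset_card] at hcard h
  have : Nonempty s := Fintype.card_pos_iff.1 (by omega)
  refine le_csInf
    ⟨_, {Classical.arbitrary s}, Finset.singleton_nonempty _, by simpa using hcard, rfl⟩ ?_
  rintro _ ⟨S, hS, hScard, rfl⟩
  rw [le_div_iff₀ (by simpa using hS.card_pos), crossCount_induce hs,
    ← Finset.card_map (.subtype (· ∈ s))]
  refine mul_card_le_crossCount_of_isRooted fun X hX => h X (fun v hv => ?_) ?_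
  · obtain ⟨w, -, rfl⟩ := Finset.mem_map.1 (hX hv)
    exact w.2
  · have := Finset.card_le_card hX
    rw [Finset.card_map] at this
    omega

theorem crossCount_pos {C : G.ConnectedComponent} {X : Finset V}
    (hX : X.Nonempty) (hXC : (X : Set V) ⊂ C.supp) : 0 < crossCount G X := by
  obtain ⟨hsub, y, hyC, hyX⟩ := Set.ssubset_iff_exists.1 hXC
  obtain ⟨x, hx⟩ := hX
  obtain ⟨w⟩ := C.reachable_of_mem_supp (hsub hx) hyC
  obtain ⟨e, -, hfst, hsnd⟩ := w.exists_boundary_dart X hx hyX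
  rw [crossCount_eq_card_interedges, Finset.card_pos]
  exact ⟨e.toProd, (G.mem_interedges_iff).2 ⟨hfst, Finset.mem_compl.2 hsnd, e.adj⟩⟩

theorem mul_card_le_crossCount {C : G.ConnectedComponent} {X : Finset V} {x : V}
    {r θ m M k : ℝ} (hcluster : ¬HasSparseClusterOfSize G θ (Finset.powersetCard 1 Finset.univ) m M)
    (hcut : ¬HasBalancedCut G M k) (hr : 0 ≤ r) (hrm : r * m ≤ 1) (hrθ : r ≤ θ)
    (hrk : r * Fintype.card V ≤ k) (hXC : ↑X ⊆ C.supp) (hcard : 2 * #X ≤ C.supp.ncard)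
    (hx : x ∈ X) (hrooted : IsRooted G X {x}) : r * #X ≤ crossCount G X := by
  have hY : #X ≤ #(C.supp.toFinset \ X) := by
    have := Finset.card_sdiff_add_card_eq_card (Set.subset_toFinset.2 hXC)
    rw [Set.ncard_eq_toFinset_card'] at hcard
    lia
  set Y := C.supp.toFinset \ X
  obtain hm | hm := lt_or_ge (#X : ℝ) m
  · have hpos : 0 < crossCount G X := crossCount_pos ⟨x, hx⟩ <| hXC.ssubset_of_ne fun h => by
      have := Finset.card_pos.2 ⟨x, hx⟩
      rw [← h, Set.ncard_coe_finset] at hcard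
      omega
    calc r * #X ≤ r * m := by gcongr
      _ ≤ 1 := hrm
      _ ≤ crossCount G X := mod_cast hpos
  obtain hM | hM := le_or_gt (#X : ℝ) M
  · by_contra! hlt
    refine hcluster ⟨{x}, by simp, #X, hm, hM, X, by simpa, rfl, hrooted, ?_⟩
    exact hlt.le.trans (by gcongr)
  · by_contra! hlt
    refine hcut ⟨C, X, Y, Finset.disjoint_sdiff, ?_, hM.le, ?_, ?_⟩
    · rw [Finset.union_sdiff_of_subset (by simpa), Set.coe_toFinset]
    · exact hM.le.trans (mod_cast hY)
    · have hle := card_interedges_mono (G := G) le_rfl (subset_refl X)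
        (Finset.subset_compl_iff_disjoint_left.2 (Finset.disjoint_sdiff (s := X)) : Y ⊆ Xᶜ)
      rw [← crossCount_eq_card_interedges] at hle
      calc (#(G.interedges X Y) : ℝ) ≤ crossCount G X := mod_cast hle
        _ ≤ r * #X := hlt.le
        _ ≤ r * Fintype.card V := by gcongr; exact X.card_le_univ
        _ ≤ k := hrk

end Cheeger

section LargestComponent

theorem le_cheegerConst_induce_reachable {V : Type*} [Fintype V] [DecidableEq V]
    {G : SimpleGraph V} {v : V} [Fintype {w | G.Reachable v w}]
    [DecidableEq {w | G.Reachable v w}] {r θ m M k : ℝ}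
    (hcluster : ¬HasSparseClusterOfSize G θ (Finset.powersetCard 1 Finset.univ) m M)
    (hcut : ¬HasBalancedCut G M k) (hr : 0 ≤ r) (hrm : r * m ≤ 1) (hrθ : r ≤ θ)
    (hrk : r * Fintype.card V ≤ k) (hv : 2 ≤ {w | G.Reachable v w}.ncard) :
    r ≤ cheegerConst (G.induce {w | G.Reachable v w}) := by
  have hsupp : {w | G.Reachable v w} = (G.connectedComponentMk v).supp := by
    ext w
    simpa using SimpleGraph.reachable_comm
  refine le_cheegerConst_induce (fun w hw x hwx => hw.trans hwx.reachable) hv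
    fun X hXC hcard x => ?_
  rw [hsupp] at hXC hcard
  exact mul_card_le_crossCount hcluster hcut hr hrm hrθ hrk hXC hcard

theorem two_le_compCard {N : ℕ} {G : SimpleGraph (Fin N)} (hG : G ≠ ⊥) {v : Fin N}
    (hv : ∀ w, compCard G w ≤ compCard G v) : 2 ≤ compCard G v := by
  obtain ⟨x, y, hxy⟩ := SimpleGraph.ne_bot_iff_exists_adj.1 hG
  refine le_trans ?_ (hv x)
  exact Fintype.one_lt_card_iff.2
    ⟨⟨x, .refl x⟩, ⟨y, hxy.reachable⟩, fun h => hxy.ne (congrArg Subtype.val h)⟩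

theorem eventually_inv_log_sq_le {θ : ℝ} (hθ : 0 < θ) (K : ℝ) :
    ∀ᶠ N : ℕ in atTop, 1 / Real.log N ^ 2 * (K * Real.log N) ≤ 1 ∧ 1 / Real.log N ^ 2 ≤ θ := by
  have hlog := Real.tendsto_log_atTop.comp (tendsto_natCast_atTop_atTop (R := ℝ))
  filter_upwards [hlog.eventually_ge_atTop 1, hlog.eventually_ge_atTop K,
    hlog.eventually_ge_atTop (1 / θ)] with N h₁ hK hθN
  simp only [Function.comp_apply] at h₁ hK hθN
  have hlog_pos : 0 < Real.log N := one_pos.trans_le h₁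
  rw [div_le_iff₀ hθ] at hθN
  constructor
  · rw [one_div_mul_eq_div, div_le_one₀ (by positivity), sq]
    gcongr
  · rw [div_le_iff₀ (by positivity)]
    nlinarith

theorem one_div_log_sq_le_cheegerConst {N : ℕ} {G : SimpleGraph (Fin N)} {θ K M : ℝ}
    (hN : 1 / Real.log N ^ 2 * (K * Real.log N) ≤ 1 ∧ 1 / Real.log N ^ 2 ≤ θ)
    (hcluster : ¬HasSparseClusterOfSize G θ (Finset.powersetCard 1 Finset.univ)
      (K * Real.log N) M)
    (hcut : ¬HasBalancedCut G M (N / Real.log N ^ 2)) (hG : G ≠ ⊥) {v : Fin N}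
    (hv : ∀ w, compCard G w ≤ compCard G v) :
    1 / Real.log N ^ 2 ≤ cheegerConst (G.induce {w : Fin N | G.Reachable v w}) := by
  refine le_cheegerConst_induce_reachable hcluster hcut (by positivity) hN.1 hN.2 ?_ ?_
  · rw [Fintype.card_fin, one_div_mul_eq_div]
  · rw [← Nat.card_coe_set_eq, Nat.card_eq_fintype_card]
    exact two_le_compCard hG hv

end LargestComponent

/-- For `β > 1`, the induced subgraph `G` on the largest connected component
of the Erdős–Rényi graph on `[N]` with parameter `β` has Cheeger constant
`Φ(G) = Ω_P(1/log² N)`: there is `c > 0` such that with probability tending to `1` as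
`N → ∞`, `Φ(G) ≥ c/log² N`. -/
theorem er_giant_cheeger (β : ℝ) (hβ : 1 < β) :
    ∃ c > (0 : ℝ),
      Tendsto
        (fun N : ℕ =>
          erProb β N (fun G =>
            ∀ v : Fin N, (∀ w : Fin N, compCard G w ≤ compCard G v) →
              c / Real.log N ^ 2 ≤ cheegerConst (G.induce {w : Fin N | G.Reachable v w})))
        atTop (nhds 1) := by
  obtain ⟨a, θ, d, ha, ha₁, hθ, hd, hdecay⟩ := exists_sparseClusterDecay hβ
  have hβ₀ : 0 < β := one_pos.trans hβ
  have hlarge : ∀ᶠ N : ℕ in atTop, β ≤ N := tendsto_natCast_atTop_atTop.eventually_ge_atTop β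
  have hmean : ∀ᶠ N : ℕ in atTop, (erParam β N : ℝ) * N = β := hlarge.mono fun N hN => by
    rw [coe_erParam hβ₀.le hN, div_mul_cancel₀ _ (hβ₀.trans_le hN).ne']
  have h : ∀ᶠ N : ℕ in atTop, SparseClusterDecay (Fin N) (erParam β N) a θ d :=
    hmean.mono fun N hN => hdecay _ _ (by rwa [Fintype.card_fin])
  have hcluster := tendsto_hasSparseClusterOfSize_log hd h
  have hcut := tendsto_hasBalancedCut ha hθ hd hβ₀ (hmean.mono fun N hN => hN.ge) h
  have hbot := tendsto_binomialRandom_singleton_bot ha ha₁.le hθ.le hd h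
  have hlimit := ((hcluster.add hcut).add hbot).const_sub 1
  simp only [add_zero, sub_zero] at hlimit
  refine ⟨1, one_pos, tendsto_of_tendsto_of_tendsto_of_le_of_le' hlimit tendsto_const_nhds ?_ ?_⟩
  · filter_upwards [hlarge, eventually_inv_log_sq_le hθ (3 / d)] with N hN hlog
    rw [erProb_eq hβ₀.le hN]
    refine one_sub_add_measureReal_le fun G hG v hv => ?_
    simp only [Set.mem_compl_iff, Set.mem_union, not_or] at hG
    exact one_div_log_sq_le_cheegerConst hlog hG.1.1 hG.1.2 hG.2 hv
  · filter_upwards [hlarge] with N hN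
    exact (erProb_eq hβ₀.le hN _).trans_le measureReal_le_one
end
end

section
/- Let γ ∈ (0,1) and β ≥ 3, and let ρ ∈ (0,1) be the unique solution of 1 − ρ = e^{−βρ}. Then I(β) = ∫_0^1 x^{−2γ} (1−ρ)^{(1/(1−γ) − 1 + γ)·x^{−γ}} dx < 1. -/
noncomputable section

/-- `I = ∫_0^1 x^{−2γ} (1−ρ)^{(1/(1−γ) − 1 + γ)·x^{−γ}} dx`. -/
def snrIntegral (γ ρ : ℝ) : ℝ :=
  ∫ x in Set.Ioc (0 : ℝ) 1,
    x ^ (-(2 * γ)) * (1 - ρ) ^ ((1 / (1 - γ) - 1 + γ) * x ^ (-γ))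

/-!
Write `1 - ρ = e^{-L}` with `L = βρ`, and `a = (1/(1-γ) - 1 + γ) L`. The tangent line
`x^{-γ} ≥ 1 - γ log x` at `x = 1` bounds the integrand by the power `e^{-a} x^{aγ - 2γ}`, so
`I ≤ e^{-a} / (1 - 2γ + aγ)`, and a quadratic lower bound for `e^a` makes this less than `1` as soon
as `L ≥ 1`. By strict convexity of the exponential, `βρ ≥ 1` once `β ≥ 1 / (1 - e^{-1}) ≈ 1.58`.
This threshold is natural: `I = 1 + 2γ(1 - L) + o(γ)` as `γ → 0`.
-/

section

open MeasureTheory Real Set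

lemma exp_neg_mul_rpow_le {a x : ℝ} (ha : 0 ≤ a) (hx : 0 < x) (t : ℝ) :
    exp (-(a * x ^ t)) ≤ exp (-a) * x ^ (-(a * t)) := by
  have tangent : log x * t + 1 ≤ x ^ t := by
    rw [rpow_def_of_pos hx]
    exact add_one_le_exp _
  rw [rpow_def_of_pos hx (-(a * t)), ← exp_add, exp_le_exp]
  linarith [mul_le_mul_of_nonneg_left tangent ha]

lemma integrableOn_rpow_Ioc_zero_one {p : ℝ} (hp : -1 < p) :
    IntegrableOn (fun x : ℝ => x ^ p) (Ioc 0 1) :=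
  (intervalIntegrable_iff_integrableOn_Ioc_of_le zero_le_one).1
    (intervalIntegral.intervalIntegrable_rpow' hp)

lemma setIntegral_rpow_Ioc_zero_one {p : ℝ} (hp : -1 < p) :
    ∫ x in Ioc (0 : ℝ) 1, x ^ p = 1 / (p + 1) := by
  rw [← intervalIntegral.integral_of_le zero_le_one, integral_rpow (Or.inl hp), one_rpow,
    zero_rpow (by linarith), sub_zero]

lemma setIntegral_rpow_mul_exp_neg_mul_rpow_le {a s t : ℝ} (ha : 0 ≤ a) (h : -1 < s - a * t) :
    ∫ x in Ioc (0 : ℝ) 1, x ^ s * exp (-(a * x ^ t)) ≤ exp (-a) / (s - a * t + 1) := by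
  have pointwise : ∀ x ∈ Ioc (0 : ℝ) 1,
      x ^ s * exp (-(a * x ^ t)) ≤ exp (-a) * x ^ (s - a * t) := fun x hx =>
    calc x ^ s * exp (-(a * x ^ t))
        ≤ x ^ s * (exp (-a) * x ^ (-(a * t))) :=
          mul_le_mul_of_nonneg_left (exp_neg_mul_rpow_le ha hx.1 t) (rpow_nonneg hx.1.le s)
      _ = exp (-a) * x ^ (s - a * t) := by
          rw [sub_eq_add_neg, rpow_add hx.1]
          ring
  have nonneg : ∀ x ∈ Ioc (0 : ℝ) 1, 0 ≤ x ^ s * exp (-(a * x ^ t)) := fun x hx =>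
    mul_nonneg (rpow_nonneg hx.1.le s) (exp_pos _).le
  calc ∫ x in Ioc (0 : ℝ) 1, x ^ s * exp (-(a * x ^ t))
      ≤ ∫ x in Ioc (0 : ℝ) 1, exp (-a) * x ^ (s - a * t) :=
        integral_mono_of_nonneg (ae_restrict_of_forall_mem measurableSet_Ioc nonneg)
          ((integrableOn_rpow_Ioc_zero_one h).const_mul _)
          (ae_restrict_of_forall_mem measurableSet_Ioc pointwise)
    _ = exp (-a) / (s - a * t + 1) := by
        rw [integral_const_mul, setIntegral_rpow_Ioc_zero_one h, mul_one_div]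

lemma snrIntegral_one_sub_exp_neg (γ L : ℝ) :
    snrIntegral γ (1 - exp (-L)) =
      ∫ x in Ioc (0 : ℝ) 1, x ^ (-(2 * γ)) * exp (-((1 / (1 - γ) - 1 + γ) * L * x ^ (-γ))) := by
  simp only [snrIntegral, sub_sub_cancel, ← exp_mul]
  ring_nf

lemma one_div_one_sub_sub_one_add {γ : ℝ} (hγ : γ ≠ 1) :
    1 / (1 - γ) - 1 + γ = γ * (2 - γ) / (1 - γ) := by
  have : 1 - γ ≠ 0 := sub_ne_zero.2 hγ.symm
  field_simp
  ring

lemma two_mul_le_of_div_one_sub_le {γ a : ℝ} (hγ : γ < 1)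
    (ha : γ * (2 - γ) / (1 - γ) ≤ a) : 2 * γ ≤ a := by
  refine le_trans ?_ ha
  rw [le_div_iff₀ (sub_pos.2 hγ)]
  nlinarith [sq_nonneg γ]

lemma one_sub_two_mul_add_mul_pos {γ a : ℝ} (hγ : 0 ≤ γ) (ha : 2 * γ ≤ a) :
    0 < 1 - 2 * γ + a * γ := by
  nlinarith [mul_le_mul_of_nonneg_right ha hγ, sq_nonneg (2 * γ - 1)]

lemma exp_neg_lt_one_sub_two_mul_add_mul {γ a : ℝ} (hγ : γ ∈ Ioo (0 : ℝ) 1)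
    (ha : γ * (2 - γ) / (1 - γ) ≤ a) : exp (-a) < 1 - 2 * γ + a * γ := by
  have two_mul_le : 2 * γ ≤ a := two_mul_le_of_div_one_sub_le hγ.2 ha
  have a_pos : 0 < a := by linarith [hγ.1]
  have linear_part : γ * (2 - γ) ≤ a * (1 - γ) := (div_le_iff₀ (sub_pos.2 hγ.2)).1 ha
  have sq_le : (2 * γ) ^ 2 ≤ a ^ 2 := pow_le_pow_left₀ (by linarith [hγ.1]) two_mul_le 2
  have cube_pos : 0 < γ * a ^ 3 := mul_pos hγ.1 (pow_pos a_pos 3)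
  have factor_pos := one_sub_two_mul_add_mul_pos hγ.1.le two_mul_le
  rw [exp_neg, inv_lt_iff_one_lt_mul₀' (exp_pos a)]
  calc 1 < 1 - 2 * γ + a * (1 - γ) + a ^ 2 / 2 + γ * a ^ 3 / 2 := by
        linarith [sq_nonneg γ]
    _ = (1 + a + a ^ 2 / 2) * (1 - 2 * γ + a * γ) := by ring
    _ ≤ exp a * (1 - 2 * γ + a * γ) :=
        mul_le_mul_of_nonneg_right (quadratic_le_exp_of_nonneg a_pos.le) factor_pos.le

lemma snrIntegral_one_sub_exp_neg_lt_one {γ L : ℝ} (hγ : γ ∈ Ioo (0 : ℝ) 1) (hL : 1 ≤ L) :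
    snrIntegral γ (1 - exp (-L)) < 1 := by
  rw [snrIntegral_one_sub_exp_neg, one_div_one_sub_sub_one_add hγ.2.ne]
  set a := γ * (2 - γ) / (1 - γ) * L
  have coeff_nonneg : 0 ≤ γ * (2 - γ) / (1 - γ) :=
    div_nonneg (mul_nonneg hγ.1.le (by linarith [hγ.2])) (by linarith [hγ.2])
  have coeff_le : γ * (2 - γ) / (1 - γ) ≤ a := le_mul_of_one_le_right coeff_nonneg hL
  have denom_eq : -(2 * γ) - a * -γ + 1 = 1 - 2 * γ + a * γ := by ring
  have denom_pos : 0 < 1 - 2 * γ + a * γ :=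
    one_sub_two_mul_add_mul_pos hγ.1.le (two_mul_le_of_div_one_sub_le hγ.2 coeff_le)
  calc ∫ x in Ioc (0 : ℝ) 1, x ^ (-(2 * γ)) * exp (-(a * x ^ (-γ)))
      ≤ exp (-a) / (1 - 2 * γ + a * γ) := by
        rw [← denom_eq]
        exact setIntegral_rpow_mul_exp_neg_mul_rpow_le (coeff_nonneg.trans coeff_le)
          (by linarith)
    _ < 1 := (div_lt_one denom_pos).2 (exp_neg_lt_one_sub_two_mul_add_mul hγ coeff_le)

lemma exp_neg_lt_one_sub_mul {L : ℝ} (hL : L ∈ Ioo (0 : ℝ) 1) :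
    exp (-L) < 1 - (1 - exp (-1)) * L := by
  have chord := strictConvexOn_exp.2 (mem_univ 0) (mem_univ (-1)) (by norm_num)
    (sub_pos.2 hL.2) hL.1 (sub_add_cancel 1 L)
  simp only [smul_eq_mul, mul_zero, zero_add, mul_neg_one, exp_zero, mul_one] at chord
  linarith

lemma one_le_mul_of_one_sub_eq_exp_neg {β ρ : ℝ} (hβ : 1 / (1 - exp (-1)) ≤ β) (hρ : 0 < ρ)
    (hfix : 1 - ρ = exp (-(β * ρ))) : 1 ≤ β * ρ := by
  have gap_pos : 0 < 1 - exp (-1) := sub_pos.2 (exp_lt_one_iff.2 (by norm_num))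
  have β_pos : 0 < β := (one_div_pos.2 gap_pos).trans_le hβ
  by_contra! h
  have below_chord := exp_neg_lt_one_sub_mul ⟨mul_pos β_pos hρ, h⟩
  have one_le : 1 ≤ β * (1 - exp (-1)) := (div_le_iff₀ gap_pos).1 hβ
  linarith [mul_le_mul_of_nonneg_right one_le hρ.le]

theorem snrIntegral_lt_one_of_three_le_general {γ β ρ : ℝ} (hγ : γ ∈ Ioo (0 : ℝ) 1)
    (hβ : 1 / (1 - exp (-1)) ≤ β) (hρ : 0 < ρ) (hfix : 1 - ρ = exp (-(β * ρ))) :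
    snrIntegral γ ρ < 1 := by
  rw [← sub_sub_cancel 1 ρ, hfix]
  exact snrIntegral_one_sub_exp_neg_lt_one hγ (one_le_mul_of_one_sub_eq_exp_neg hβ hρ hfix)

lemma one_div_one_sub_exp_neg_one_le_three : 1 / (1 - exp (-1)) ≤ 3 := by
  have := exp_neg_one_lt_d9
  rw [div_le_iff₀ (by linarith)]
  linarith

end

/-- For `γ ∈ (0,1)`, `β ≥ 3` and `ρ ∈ (0,1)` the unique solution of
`1 − ρ = e^{−βρ}`, the integral `I(β)` is less than `1`. -/
theorem snrIntegral_lt_one_of_three_le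
    (γ β ρ : ℝ) (hγ : γ ∈ Set.Ioo (0 : ℝ) 1) (hβ : 3 ≤ β)
    (hρ : ρ ∈ Set.Ioo (0 : ℝ) 1) (hfix : 1 - ρ = Real.exp (-(β * ρ))) :
    snrIntegral γ ρ < 1 :=
  snrIntegral_lt_one_of_three_le_general hγ
    (one_div_one_sub_exp_neg_one_le_three.trans hβ) hρ.1 hfix
end
end

section
/- Let γ ∈ [1/2, 1) and β ≥ 2, and let ρ ∈ (0,1) be the unique solution of 1 − ρ = e^{−βρ}. Then I(β) = ∫_0^1 x^{−2γ} (1−ρ)^{(1/(1−γ) − 1 + γ)·x^{−γ}} dx < 1. -/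
noncomputable section

/-! Put `κ = 1/(1-γ) - 1 + γ`. A convexity argument shows that `βρ ≥ 1` as soon as
`β ≥ 1/(1 - e⁻¹)`, and then `(1-ρ)^(κ x^(-γ)) ≤ exp(-κ x^(-γ))`. The tangent line bound
`x^(-γ) = exp(-γ log x) ≥ 1 - γ log x` turns this into the power `e^(-κ) x^(κγ)`, so that
`I ≤ e^(-κ) / (1 + γ(κ-2))`. In terms of `s = 1 - γ` one has `κ = 1/s - s` and
`1 + γ(κ-2) = s² + (1-s)²/s`, and replacing `e^κ` by `1 + κ + κ²/2` leaves a polynomial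
inequality on `(0,1)`.

The threshold on `β` is the best one uniform in `γ`: as `γ → 0`, `I = 1 + 2γ(1 - βρ) + o(γ)`. -/

section

open Real Set MeasureTheory

theorem mul_one_sub_exp_neg_lt {u c : ℝ} (hu : 0 < u) (huc : u < c) :
    u * (1 - exp (-c)) < c * (1 - exp (-u)) := by
  have hc : 0 < c := hu.trans huc
  have hconv : exp (-u) < (1 - u / c) + u / c * exp (-c) := by
    have h := strictConvexOn_exp.2 (mem_univ 0) (mem_univ (-c)) (by linarith)
      (sub_pos.2 ((div_lt_one hc).2 huc)) (div_pos hu hc) (sub_add_cancel 1 (u / c))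
    have hu' : u / c * -c = -u := by field_simp
    simpa only [smul_eq_mul, mul_zero, zero_add, exp_zero, mul_one, hu'] using h
  calc u * (1 - exp (-c)) = c * (1 - ((1 - u / c) + u / c * exp (-c))) := by field_simp; ring
    _ < c * (1 - exp (-u)) := by gcongr

theorem le_mul_of_one_sub_eq_exp {β ρ c : ℝ} (hρ : 0 < ρ) (hfix : 1 - ρ = exp (-(β * ρ)))
    (hc : c ≤ β * (1 - exp (-c))) : c ≤ β * ρ := by
  by_contra! hlt
  have hpos : 0 < β * ρ := by
    have : exp (-(β * ρ)) < 1 := by linarith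
    simpa only [exp_lt_one_iff, neg_lt_zero] using this
  have hchord := mul_one_sub_exp_neg_lt hpos hlt
  rw [← hfix, sub_sub_cancel] at hchord
  have := mul_le_mul_of_nonneg_right hc hρ.le
  linarith

theorem exp_neg_mul_rpow_neg_le {x K : ℝ} (γ : ℝ) (hx : 0 < x) (hK : 0 ≤ K) :
    exp (-(K * x ^ (-γ))) ≤ exp (-K) * x ^ (K * γ) := by
  have htangent : log x * -γ + 1 ≤ x ^ (-γ) := by
    simpa only [rpow_def_of_pos hx] using add_one_le_exp (log x * -γ)
  rw [rpow_def_of_pos hx (K * γ), ← exp_add, exp_le_exp]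
  linarith [mul_le_mul_of_nonneg_left htangent hK]

theorem rpow_mul_rpow_neg_le {q x K : ℝ} (γ : ℝ) (hq : q ∈ Icc 0 (exp (-1))) (hx : 0 < x)
    (hK : 0 ≤ K) : q ^ (K * x ^ (-γ)) ≤ exp (-K) * x ^ (K * γ) :=
  calc q ^ (K * x ^ (-γ)) ≤ exp (-1) ^ (K * x ^ (-γ)) :=
        rpow_le_rpow hq.1 hq.2 (by positivity)
    _ = exp (-(K * x ^ (-γ))) := by rw [← exp_mul, neg_one_mul]
    _ ≤ exp (-K) * x ^ (K * γ) := exp_neg_mul_rpow_neg_le γ hx hK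

theorem setIntegral_rpow_mul_rpow_neg_le {q p γ K : ℝ} (hq : q ∈ Icc 0 (exp (-1)))
    (hK : 0 ≤ K) (hp : -1 < p + K * γ) :
    ∫ x in Ioc (0 : ℝ) 1, x ^ p * q ^ (K * x ^ (-γ)) ≤ exp (-K) / (p + K * γ + 1) := by
  have hint : IntegrableOn (fun x : ℝ ↦ x ^ (p + K * γ)) (Ioc 0 1) :=
    (intervalIntegrable_iff_integrableOn_Ioc_of_le zero_le_one).1
      (intervalIntegral.intervalIntegrable_rpow' hp)
  calc ∫ x in Ioc (0 : ℝ) 1, x ^ p * q ^ (K * x ^ (-γ))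
      ≤ ∫ x in Ioc (0 : ℝ) 1, exp (-K) * x ^ (p + K * γ) := by
        refine integral_mono_of_nonneg ?_ (hint.const_mul _) ?_ <;>
          filter_upwards [ae_restrict_mem measurableSet_Ioc] with x hx
        · exact mul_nonneg (rpow_nonneg hx.1.le _) (rpow_nonneg hq.1 _)
        · rw [rpow_add hx.1, mul_left_comm]
          exact mul_le_mul_of_nonneg_left (rpow_mul_rpow_neg_le γ hq hx.1 hK)
            (rpow_nonneg hx.1.le p)
    _ = exp (-K) / (p + K * γ + 1) := by
        rw [integral_const_mul, ← intervalIntegral.integral_of_le zero_le_one,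
          integral_rpow (Or.inl hp), one_rpow, zero_rpow (by linarith), sub_zero,
          mul_one_div]

theorem one_lt_mul_exp_one_div_sub {s : ℝ} (hs : s ∈ Ioo (0 : ℝ) 1) :
    1 < (s ^ 2 + (1 - s) ^ 2 / s) * exp (1 / s - s) := by
  obtain ⟨hs0, hs1⟩ := hs
  have hexp : 1 + (1 / s - s) + (1 / s - s) ^ 2 / 2 ≤ exp (1 / s - s) :=
    quadratic_le_exp_of_nonneg (sub_nonneg.2 (hs1.le.trans (one_le_one_div hs0 hs1.le)))
  have hquot : 0 < 1 + 2 * s - 3 * s ^ 3 + s ^ 4 + s ^ 5 := by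
    have hcube : s ^ 3 ≤ s := pow_le_of_le_one hs0.le hs1.le (by norm_num)
    have : 0 < s ^ 4 + s ^ 5 := by positivity
    linarith
  have hfactor : (s ^ 2 + (1 - s) ^ 2 / s) * (1 + (1 / s - s) + (1 / s - s) ^ 2 / 2) - 1 =
      (1 - s) ^ 2 * (1 + 2 * s - 3 * s ^ 3 + s ^ 4 + s ^ 5) / (2 * s ^ 3) := by
    field_simp
    ring
  have hpos : 0 < (1 - s) ^ 2 * (1 + 2 * s - 3 * s ^ 3 + s ^ 4 + s ^ 5) / (2 * s ^ 3) := by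
    have := sub_pos.2 hs1
    positivity
  calc 1 < (s ^ 2 + (1 - s) ^ 2 / s) * (1 + (1 / s - s) + (1 / s - s) ^ 2 / 2) := by linarith
    _ ≤ (s ^ 2 + (1 - s) ^ 2 / s) * exp (1 / s - s) := by gcongr

theorem snrIntegral_lt_one_of_one_sub_le_exp {γ ρ : ℝ} (hγ : γ ∈ Ioo (0 : ℝ) 1) (hρ : ρ ≤ 1)
    (hρe : 1 - ρ ≤ exp (-1)) : snrIntegral γ ρ < 1 := by
  obtain ⟨hγ0, hγ1⟩ := hγ
  have hs : 0 < 1 - γ := sub_pos.2 hγ1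
  set κ := 1 / (1 - γ) - 1 + γ with hκ
  have hκ0 : 0 ≤ κ := by linarith [one_le_one_div hs (by linarith)]
  have hden : -(2 * γ) + κ * γ + 1 = (1 - γ) ^ 2 + (1 - (1 - γ)) ^ 2 / (1 - γ) := by
    rw [hκ]
    field_simp
    ring
  have hden_pos : 0 < -(2 * γ) + κ * γ + 1 := by
    rw [hden]
    positivity
  have hlt : 1 < (-(2 * γ) + κ * γ + 1) * exp κ := by
    rw [hden, show κ = 1 / (1 - γ) - (1 - γ) by rw [hκ]; ring]
    exact one_lt_mul_exp_one_div_sub ⟨hs, by linarith⟩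
  calc snrIntegral γ ρ ≤ exp (-κ) / (-(2 * γ) + κ * γ + 1) :=
        setIntegral_rpow_mul_rpow_neg_le ⟨sub_nonneg.2 hρ, hρe⟩ hκ0 (by linarith)
    _ < 1 := by
        rwa [div_lt_one hden_pos, exp_neg, inv_lt_iff_one_lt_mul₀ (exp_pos κ)]

end

theorem snrIntegral_lt_one_of_two_le_general (γ β ρ : ℝ) (hγ : γ ∈ Set.Ioo (0 : ℝ) 1)
    (hβ : (1 - Real.exp (-1))⁻¹ ≤ β) (hρ : 0 < ρ) (hfix : 1 - ρ = Real.exp (-(β * ρ))) :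
    snrIntegral γ ρ < 1 := by
  have hpos : 0 < 1 - Real.exp (-1) := sub_pos.2 (Real.exp_lt_one_iff.2 (by norm_num))
  have hβρ : 1 ≤ β * ρ := le_mul_of_one_sub_eq_exp hρ hfix ((inv_le_iff_one_le_mul₀ hpos).1 hβ)
  refine snrIntegral_lt_one_of_one_sub_le_exp hγ ?_ ?_
  · linarith [Real.exp_pos (-(β * ρ))]
  · rw [hfix]
    gcongr

/-- For `γ ∈ [1/2,1)`, `β ≥ 2` and `ρ ∈ (0,1)` the unique solution of
`1 − ρ = e^{−βρ}`, the integral `I(β)` is less than `1`. -/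
theorem snrIntegral_lt_one_of_two_le
    (γ β ρ : ℝ) (hγ : γ ∈ Set.Ico (1 / 2 : ℝ) 1) (hβ : 2 ≤ β)
    (hρ : ρ ∈ Set.Ioo (0 : ℝ) 1) (hfix : 1 - ρ = Real.exp (-(β * ρ))) :
    snrIntegral γ ρ < 1 := by
  have hthreshold : (1 - Real.exp (-1))⁻¹ ≤ 2 :=
    inv_le_of_inv_le₀ two_pos (by linarith [Real.exp_neg_one_lt_half])
  exact snrIntegral_lt_one_of_two_le_general γ β ρ ⟨by linarith [hγ.1], hγ.2⟩
    (hthreshold.trans hβ) hρ.1 hfix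
end
end

section
/- Let γ ∈ (0,1) and ρ ∈ (0,1), and set I = ∫_0^1 x^{−2γ} (1−ρ)^{(1/(1−γ) − 1 + γ)·x^{−γ}} dx. If log(1/(1−ρ)) > 1/(γ·(1/(1−γ) − 1 + γ)), then I < 1. -/
/-!
Substituting `u = x ^ (-γ)`, the integrand is `u ^ 2 * exp (-(c * u))` with
`c = (1 / (1 - γ) - 1 + γ) * log (1 / (1 - ρ))`. Its maximum over `u ≥ 0` is `(2 / (e * c)) ^ 2`,
attained at `u = 2 / c`, and `(0, 1]` has measure one, so the integral is below one as soon as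
`c > 2 / e`. The criterion gives `c > 1 / γ > 1 > 2 / e`.
-/

noncomputable section

section

open MeasureTheory Real Set

lemma pow_mul_exp_neg_mul_le (n : ℕ) {c u : ℝ} (hc : 0 < c) (hu : 0 ≤ u) :
    u ^ n * exp (-(c * u)) ≤ (n / (exp 1 * c)) ^ n := by
  rcases eq_or_ne n 0 with rfl | hn
  · simpa using mul_nonneg hc.le hu
  have hn_pos : (0 : ℝ) < n := by positivity
  have base_le : u * exp (-(c * u / n)) ≤ n / (exp 1 * c) :=
    calc u * exp (-(c * u / n))
        = n / c * (c * u / n * exp (-(c * u / n))) := by field_simp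
      _ ≤ n / c * exp (-1) := by gcongr; exact mul_exp_neg_le_exp_neg_one _
      _ = n / (exp 1 * c) := by rw [exp_neg]; field_simp
  calc u ^ n * exp (-(c * u))
      = (u * exp (-(c * u / n))) ^ n := by
        rw [mul_pow, ← exp_nat_mul, mul_neg, mul_div_cancel₀ _ hn_pos.ne']
    _ ≤ (n / (exp 1 * c)) ^ n := by gcongr

lemma setIntegral_pow_mul_exp_neg_mul_le {α : Type*} [MeasurableSpace α] {μ : Measure α}
    {s : Set α} (hs : μ s < ⊤) {u : α → ℝ} (hu : ∀ x ∈ s, 0 ≤ u x) (n : ℕ) {c : ℝ}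
    (hc : 0 < c) :
    ∫ x in s, u x ^ n * exp (-(c * u x)) ∂μ ≤ (n / (exp 1 * c)) ^ n * μ.real s := by
  refine (le_norm_self _).trans (norm_setIntegral_le_of_norm_le_const hs fun x hx ↦ ?_)
  have := hu x hx
  rw [norm_of_nonneg (by positivity)]
  exact pow_mul_exp_neg_mul_le n hc this

/-- The decay rate `c` for which the integrand of `snrIntegral γ ρ` is `u ^ 2 * exp (-(c * u))`
in terms of `u = x ^ (-γ)`. -/
def snrRate (γ ρ : ℝ) : ℝ :=
  (1 / (1 - γ) - 1 + γ) * log (1 / (1 - ρ))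

variable {γ ρ : ℝ}

lemma snrIntegral_eq_setIntegral_sq_mul_exp (hρ : ρ < 1) :
    snrIntegral γ ρ =
      ∫ x in Ioc (0 : ℝ) 1, (x ^ (-γ)) ^ 2 * exp (-(snrRate γ ρ * x ^ (-γ))) := by
  refine setIntegral_congr_fun measurableSet_Ioc fun x hx ↦ ?_
  have hsq : x ^ (-(2 * γ)) = (x ^ (-γ)) ^ 2 := by
    rw [← rpow_mul_natCast hx.1.le]
    congr 1
    push_cast
    ring
  have hexp : (1 - ρ) ^ ((1 / (1 - γ) - 1 + γ) * x ^ (-γ)) =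
      exp (-(snrRate γ ρ * x ^ (-γ))) := by
    rw [rpow_def_of_pos (sub_pos.2 hρ), snrRate, one_div (1 - ρ), log_inv]
    congr 1
    ring
  simp only [hsq, hexp]

lemma snrIntegral_le_sq (hρ : ρ < 1) (hc : 0 < snrRate γ ρ) :
    snrIntegral γ ρ ≤ (2 / (exp 1 * snrRate γ ρ)) ^ 2 := by
  rw [snrIntegral_eq_setIntegral_sq_mul_exp hρ]
  simpa using setIntegral_pow_mul_exp_neg_mul_le (μ := volume) (s := Ioc (0 : ℝ) 1) (by simp)
    (fun x hx ↦ rpow_nonneg hx.1.le (-γ)) 2 hc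

theorem snrIntegral_lt_one_first_criterion_general (hρ : ρ < 1)
    (h : 2 / exp 1 < snrRate γ ρ) : snrIntegral γ ρ < 1 := by
  have hc : 0 < snrRate γ ρ := lt_trans (by positivity) h
  refine (snrIntegral_le_sq hρ hc).trans_lt (pow_lt_one₀ (by positivity) ?_ two_ne_zero)
  rwa [div_lt_one (by positivity), ← div_lt_iff₀' (exp_pos 1)]

lemma one_div_one_sub_sub_one_add_pos (hγ : γ ∈ Ioo (0 : ℝ) 1) : 0 < 1 / (1 - γ) - 1 + γ := by
  have : 1 < 1 / (1 - γ) := one_lt_one_div (by linarith [hγ.2]) (by linarith [hγ.1])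
  linarith [hγ.1]

lemma one_div_lt_snrRate (hγ : γ ∈ Ioo (0 : ℝ) 1)
    (h : 1 / (γ * (1 / (1 - γ) - 1 + γ)) < log (1 / (1 - ρ))) : 1 / γ < snrRate γ ρ := by
  rwa [← div_div, div_lt_iff₀' (one_div_one_sub_sub_one_add_pos hγ)] at h

lemma two_div_exp_one_lt_one : 2 / exp 1 < 1 :=
  (div_lt_one (exp_pos 1)).2 exp_one_gt_two

end

/-- For `γ ∈ (0,1)` and `ρ ∈ (0,1)`, if
`log(1/(1−ρ)) > 1/(γ·(1/(1−γ) − 1 + γ))` then `I < 1`. -/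
theorem snrIntegral_lt_one_first_criterion
    (γ ρ : ℝ) (hγ : γ ∈ Set.Ioo (0 : ℝ) 1) (hρ : ρ ∈ Set.Ioo (0 : ℝ) 1)
    (h : 1 / (γ * (1 / (1 - γ) - 1 + γ)) < Real.log (1 / (1 - ρ))) :
    snrIntegral γ ρ < 1 :=
  snrIntegral_lt_one_first_criterion_general hρ.2 <|
    two_div_exp_one_lt_one.trans <| (one_lt_one_div hγ.1 hγ.2).trans (one_div_lt_snrRate hγ h)
end
end

section
/- Let γ ∈ (0, 1/2) and ρ ∈ (0,1), and set I = ∫_0^1 x^{−2γ} (1−ρ)^{(1/(1−γ) − 1 + γ)·x^{−γ}} dx. If log(1/(1−ρ)) > −log(1 − 2γ)/(1/(1−γ) − 1 + γ), then I < 1. -/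
/-!
On `(0, 1]` the factor `x ^ (-γ)` is at least `1` for `γ > 0`, so the power of `1 - ρ` in the
integrand is at most `(1 - ρ) ^ c`, where `c = 1 / (1 - γ) - 1 + γ > 0`. Integrating the remaining
weight `x ^ (-(2 * γ))` gives `I ≤ (1 - ρ) ^ c / (1 - 2 * γ)`, and the criterion says exactly that
this bound is below `1`.
-/

noncomputable section

open MeasureTheory Set

theorem rpow_lt_iff_neg_log_div_lt {q c d : ℝ} (hq : 0 < q) (hc : 0 < c) (hd : 0 < d) :
    q ^ c < d ↔ -Real.log d / c < Real.log (1 / q) := by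
  rw [Real.rpow_lt_iff_lt_log hq hd, div_lt_iff₀ hc, one_div, Real.log_inv, neg_mul, neg_lt_neg_iff,
    mul_comm]

theorem integral_mul_rpow_le {α : Type*} [MeasurableSpace α] {μ : Measure α} {w φ : α → ℝ}
    {q c : ℝ} (hq : 0 < q) (hq₁ : q ≤ 1) (hw : 0 ≤ᵐ[μ] w) (hw_int : Integrable w μ)
    (hφ : ∀ᵐ x ∂μ, c ≤ φ x) :
    ∫ x, w x * q ^ φ x ∂μ ≤ (∫ x, w x ∂μ) * q ^ c := by
  rw [← integral_mul_const]
  refine integral_mono_of_nonneg ?_ (hw_int.mul_const _) ?_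
  · filter_upwards [hw] with x hx using mul_nonneg hx (Real.rpow_nonneg hq.le _)
  · filter_upwards [hw, hφ] with x hx hcx
    exact mul_le_mul_of_nonneg_left (Real.rpow_le_rpow_of_exponent_ge hq hq₁ hcx) hx

theorem integrableOn_Ioc_rpow {b s : ℝ} (hs : -1 < s) :
    IntegrableOn (fun x : ℝ => x ^ s) (Ioc 0 b) :=
  (intervalIntegral.intervalIntegrable_rpow' hs).1

theorem integral_Ioc_rpow {b s : ℝ} (hb : 0 ≤ b) (hs : -1 < s) :
    ∫ x in Ioc (0 : ℝ) b, x ^ s = b ^ (s + 1) / (s + 1) := by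
  rw [← intervalIntegral.integral_of_le hb, integral_rpow (Or.inl hs),
    Real.zero_rpow (by linarith), sub_zero]

/-- The coefficient of `x ^ (-γ)` in the exponent of `1 - ρ` in `snrIntegral γ ρ`; it is used for
`γ < 1`, away from the junk value of `1 / (1 - γ)` at `γ = 1`. -/
def snrExponent (γ : ℝ) : ℝ :=
  1 / (1 - γ) - 1 + γ

theorem snrExponent_eq_mul {γ : ℝ} (hγ : γ ≠ 1) :
    snrExponent γ = γ * ((2 - γ) / (1 - γ)) := by
  have : 1 - γ ≠ 0 := sub_ne_zero.2 hγ.symm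
  unfold snrExponent
  field_simp
  ring

theorem snrExponent_pos {γ : ℝ} (hγ : γ ∈ Ioo (0 : ℝ) 1) : 0 < snrExponent γ := by
  rw [snrExponent_eq_mul hγ.2.ne]
  exact mul_pos hγ.1 (div_pos (by linarith [hγ.2]) (sub_pos.2 hγ.2))

theorem snrExponent_nonpos {γ : ℝ} (hγ : γ ≤ 0) : snrExponent γ ≤ 0 := by
  rw [snrExponent_eq_mul (by linarith)]
  exact mul_nonpos_of_nonpos_of_nonneg hγ (div_nonneg (by linarith) (by linarith))

theorem snrExponent_le_mul_rpow_neg {γ x : ℝ} (hγ : γ < 1) (hx : x ∈ Ioc (0 : ℝ) 1) :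
    snrExponent γ ≤ snrExponent γ * x ^ (-γ) := by
  rcases le_or_gt γ 0 with hγ₀ | hγ₀
  · exact le_mul_of_le_one_right (snrExponent_nonpos hγ₀) <|
      Real.rpow_le_one hx.1.le hx.2 (neg_nonneg.2 hγ₀)
  · exact le_mul_of_one_le_right (snrExponent_pos ⟨hγ₀, hγ⟩).le <|
      Real.one_le_rpow_of_pos_of_le_one_of_nonpos hx.1 hx.2 (neg_nonpos.2 hγ₀.le)

theorem snrIntegral_le {γ ρ : ℝ} (hγ : γ < 1 / 2) (hρ : ρ ∈ Ico (0 : ℝ) 1) :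
    snrIntegral γ ρ ≤ (1 - ρ) ^ snrExponent γ / (1 - 2 * γ) := by
  have hs : -1 < -(2 * γ) := by linarith
  have h_weight : ∀ᵐ x ∂volume.restrict (Ioc (0 : ℝ) 1), 0 ≤ x ^ (-(2 * γ)) :=
    ae_restrict_of_forall_mem measurableSet_Ioc fun _ hx => Real.rpow_nonneg hx.1.le _
  have h_exponent : ∀ᵐ x ∂volume.restrict (Ioc (0 : ℝ) 1),
      snrExponent γ ≤ snrExponent γ * x ^ (-γ) :=
    ae_restrict_of_forall_mem measurableSet_Ioc fun _ hx =>
      snrExponent_le_mul_rpow_neg (by linarith) hx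
  calc snrIntegral γ ρ
      ≤ (∫ x in Ioc (0 : ℝ) 1, x ^ (-(2 * γ))) * (1 - ρ) ^ snrExponent γ :=
        integral_mul_rpow_le (sub_pos.2 hρ.2) (sub_le_self 1 hρ.1) h_weight
          (integrableOn_Ioc_rpow hs) h_exponent
    _ = (1 - ρ) ^ snrExponent γ / (1 - 2 * γ) := by
        rw [integral_Ioc_rpow zero_le_one hs, Real.one_rpow, one_div_mul_eq_div, neg_add_eq_sub]

/-- For `γ ∈ (0,1/2)` and `ρ ∈ (0,1)`, if
`log(1/(1−ρ)) > −log(1−2γ)/(1/(1−γ) − 1 + γ)` then `I < 1`. -/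
theorem snrIntegral_lt_one_second_criterion
    (γ ρ : ℝ) (hγ : γ ∈ Set.Ioo (0 : ℝ) (1 / 2)) (hρ : ρ ∈ Set.Ioo (0 : ℝ) 1)
    (h : -Real.log (1 - 2 * γ) / (1 / (1 - γ) - 1 + γ) < Real.log (1 / (1 - ρ))) :
    snrIntegral γ ρ < 1 := by
  have hd : 0 < 1 - 2 * γ := by linarith [hγ.2]
  have hc : 0 < snrExponent γ := snrExponent_pos ⟨hγ.1, by linarith [hγ.2]⟩
  calc snrIntegral γ ρ
      ≤ (1 - ρ) ^ snrExponent γ / (1 - 2 * γ) := snrIntegral_le hγ.2 ⟨hρ.1.le, hρ.2⟩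
    _ < 1 := (div_lt_one hd).2 ((rpow_lt_iff_neg_log_div_lt (sub_pos.2 hρ.2) hc hd).2 h)
end
end

section
/- If β > 0 and ρ ∈ (0,1) satisfy 1 − ρ = e^{−βρ}, then β(1 − ρ) < 1. -/
/-!
The number `β(1 − ρ) = βe^{−βρ}` is the slope at `ρ` of the strictly concave function
`x ↦ 1 − e^{−βx}`, which fixes both `0` and `ρ`. By strict concavity this slope is smaller than
that of the chord over `[0, ρ]`, which is `1`.
-/

theorem mul_exp_neg_lt_one_sub_exp_neg {x : ℝ} (hx : x ≠ 0) :
    x * Real.exp (-x) < 1 - Real.exp (-x) := by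
  have tangent_bound : (x + 1) * Real.exp (-x) < 1 := calc
    (x + 1) * Real.exp (-x) < Real.exp x * Real.exp (-x) := by
      gcongr
      exact Real.add_one_lt_exp hx
    _ = 1 := by rw [← Real.exp_add, add_neg_cancel, Real.exp_zero]
  linarith

/-- If `β > 0` and `ρ ∈ (0,1)` satisfy `1 − ρ = e^{−βρ}`, then
`β(1 − ρ) < 1`. -/
theorem beta_one_sub_rho_lt_one (β ρ : ℝ) (hβ : 0 < β) (hρ : ρ ∈ Set.Ioo (0 : ℝ) 1)
    (hfix : 1 - ρ = Real.exp (-(β * ρ))) : β * (1 - ρ) < 1 := by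
  have slope_lt_chord : β * (1 - ρ) * ρ < 1 * ρ := calc
    β * (1 - ρ) * ρ = β * ρ * Real.exp (-(β * ρ)) := by rw [← hfix]; ring
    _ < 1 - Real.exp (-(β * ρ)) := mul_exp_neg_lt_one_sub_exp_neg (mul_pos hβ hρ.1).ne'
    _ = 1 * ρ := by rw [← hfix]; ring
  exact lt_of_mul_lt_mul_right slope_lt_chord hρ.1.le
end

section
/- Let β > 0, γ ∈ (0,1), ε > 0 and α ≥ 1/γ. Then there exists C > 0 such that, with probability tending to 1 as N → ∞, the Simplified Norros–Reittu graph G_N satisfies max over vertices v ∈ [N] with v ≥ εN·log^{−α} N of d(v) ≤ C·log^{αγ} N, where d(v) denotes the degree of v. -/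
open scoped Classical
open Filter

noncomputable section

/-- Edge probability of the Simplified Norros–Reittu graph between (1-based) vertices
`i` and `j` of `[N]`: `1 - exp(-β N^(2γ-1) i^(-γ) j^(-γ))`. -/
def snrEdgeProb (β γ : ℝ) (N i j : ℕ) : ℝ :=
  1 - Real.exp (-(β * (N : ℝ) ^ (2 * γ - 1) * (i : ℝ) ^ (-γ) * (j : ℝ) ^ (-γ)))

/-- Probability that the Simplified Norros–Reittu graph `G_N` satisfies the property `A`. -/
def snrProb (β γ : ℝ) (N : ℕ) (A : SimpleGraph (Fin N) → Prop) : ℝ :=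
  graphProb (snrEdgeProb β γ N) N A

/-!
The degree of a vertex is a sum of independent indicators, so its exponential moment factorises over
the edges at that vertex and Chernoff's bound at `t = 1` gives
`P(d(v) > D) ≤ exp ((e - 1) * E d(v) - D)`. For `v ≥ ε N log^{-α} N` the mean is at most
`β / (1 - γ) * (N / v) ^ γ ≤ K log^{αγ} N` with `K = β ε^{-γ} / (1 - γ)`. With
`D = ((e - 1) K + 2) log^{αγ} N`, the assumption `αγ ≥ 1` bounds each failure probability by
`exp (-2 log N) = N⁻²`, and the union bound over at most `N` vertices leaves `1 / N`.
-/

section IndependentEdges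

variable {V : Type*} [Fintype V] [DecidableEq V]

/-- The law of the random graph on `V` in which each edge `e` is present independently with
probability `q e`. In contrast to `graphWeight`, edges are unordered pairs and `V` carries no
order; the values of `q` on the diagonal play no role. -/
def independentEdgeWeight (q : Sym2 V → ℝ) (G : SimpleGraph V) : ℝ :=
  ∏ e ∈ (⊤ : SimpleGraph V).edgeFinset, if e ∈ G.edgeSet then q e else 1 - q e

/-- The probability that a random graph with law `independentEdgeWeight q` satisfies `A`. -/
def independentEdgeProb (q : Sym2 V → ℝ) (A : SimpleGraph V → Prop) : ℝ :=
  ∑ G : SimpleGraph V with A G, independentEdgeWeight q G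

theorem filter_mem_edgeSet_edgeFinset_top (G : SimpleGraph V) :
    {e ∈ (⊤ : SimpleGraph V).edgeFinset | e ∈ G.edgeSet} = G.edgeFinset := by
  ext e
  simpa using fun h => G.not_isDiag_of_mem_edgeSet h

theorem sum_prod_ite_mem_edgeSet {R : Type*} [CommSemiring R] (a b : Sym2 V → R) :
    ∑ G : SimpleGraph V, ∏ e ∈ (⊤ : SimpleGraph V).edgeFinset,
        (if e ∈ G.edgeSet then a e else b e) =
      ∏ e ∈ (⊤ : SimpleGraph V).edgeFinset, (a e + b e) := by
  rw [Finset.prod_add]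
  refine Finset.sum_bij' (fun G _ => G.edgeFinset)
    (fun T _ => SimpleGraph.fromEdgeSet (T : Set (Sym2 V))) ?_ ?_ ?_ ?_ ?_
  · intro G _
    exact Finset.mem_powerset.2 (SimpleGraph.edgeFinset_mono le_top)
  · simp
  · simp
  · intro T hT
    rw [Finset.mem_powerset, ← Finset.coe_subset, SimpleGraph.coe_edgeFinset,
      SimpleGraph.edgeSet_top] at hT
    rw [← Finset.coe_inj, SimpleGraph.coe_edgeFinset, SimpleGraph.edgeSet_fromEdgeSet]
    exact sdiff_eq_left.2 (Set.subset_compl_iff_disjoint_right.1 hT)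
  · intro G _
    rw [Finset.prod_ite, Finset.filter_not, filter_mem_edgeSet_edgeFinset_top]

theorem sum_independentEdgeWeight (q : Sym2 V → ℝ) :
    ∑ G : SimpleGraph V, independentEdgeWeight q G = 1 := by
  simp [independentEdgeWeight, sum_prod_ite_mem_edgeSet, -SimpleGraph.edgeFinset_top]

variable {q : Sym2 V → ℝ}

theorem independentEdgeWeight_nonneg (hq : ∀ e, q e ∈ Set.Icc 0 1) (G : SimpleGraph V) :
    0 ≤ independentEdgeWeight q G := by
  refine Finset.prod_nonneg fun e _ => ?_
  split_ifs
  exacts [(hq e).1, sub_nonneg.2 (hq e).2]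

theorem exp_mul_degree_eq_prod (t : ℝ) (G : SimpleGraph V) (v : V) :
    Real.exp (t * G.degree v) = ∏ e ∈ (⊤ : SimpleGraph V).edgeFinset,
      if e ∈ G.edgeSet then (if v ∈ e then Real.exp t else 1) else 1 := by
  rw [← Finset.prod_filter, filter_mem_edgeSet_edgeFinset_top, ← Finset.prod_filter,
    ← SimpleGraph.incidenceFinset_eq_filter, Finset.prod_const,
    SimpleGraph.card_incidenceFinset_eq_degree, ← Real.exp_nat_mul, mul_comm]

theorem sum_exp_mul_degree_mul_independentEdgeWeight (q : Sym2 V → ℝ) (t : ℝ) (v : V) :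
    ∑ G : SimpleGraph V, Real.exp (t * G.degree v) * independentEdgeWeight q G =
      ∏ e ∈ (⊤ : SimpleGraph V).incidenceFinset v, (1 + (Real.exp t - 1) * q e) := by
  simp_rw [exp_mul_degree_eq_prod, independentEdgeWeight, ← Finset.prod_mul_distrib, ite_mul_ite,
    one_mul]
  rw [sum_prod_ite_mem_edgeSet, SimpleGraph.incidenceFinset_eq_filter, Finset.prod_filter]
  refine Finset.prod_congr rfl fun e _ => ?_
  split_ifs <;> ring

theorem independentEdgeProb_le_one (hq : ∀ e, q e ∈ Set.Icc 0 1) (A : SimpleGraph V → Prop) :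
    independentEdgeProb q A ≤ 1 := by
  rw [← sum_independentEdgeWeight q]
  exact Finset.sum_le_sum_of_subset_of_nonneg (Finset.filter_subset _ _)
    fun G _ _ => independentEdgeWeight_nonneg hq G

theorem one_sub_sum_independentEdgeProb_not_le {ι : Type*} (hq : ∀ e, q e ∈ Set.Icc 0 1)
    (S : Finset ι) (A : ι → SimpleGraph V → Prop) :
    1 - ∑ i ∈ S, independentEdgeProb q (fun G => ¬ A i G) ≤
      independentEdgeProb q (fun G => ∀ i ∈ S, A i G) := by
  rw [sub_le_iff_le_add, ← sum_independentEdgeWeight q]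
  simp only [independentEdgeProb, Finset.sum_filter]
  rw [Finset.sum_comm, ← Finset.sum_add_distrib]
  refine Finset.sum_le_sum fun G _ => ?_
  have hw := independentEdgeWeight_nonneg hq G
  have hnonneg : ∀ i ∈ S, 0 ≤ if ¬ A i G then independentEdgeWeight q G else 0 :=
    fun i _ => ite_nonneg hw le_rfl
  by_cases hG : ∀ i ∈ S, A i G
  · rw [if_pos hG]
    exact le_add_of_nonneg_right (Finset.sum_nonneg hnonneg)
  · rw [if_neg hG, zero_add]
    push Not at hG
    obtain ⟨i, hi, hiG⟩ := hG
    simpa only [if_pos hiG] using Finset.single_le_sum hnonneg hi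

theorem independentEdgeProb_lt_le_exp_mul_sum (hq : ∀ e, q e ∈ Set.Icc 0 1) {t : ℝ} (ht : 0 ≤ t)
    (X : SimpleGraph V → ℝ) (D : ℝ) :
    independentEdgeProb q (fun G => D < X G) ≤
      Real.exp (-(t * D)) * ∑ G, Real.exp (t * X G) * independentEdgeWeight q G := by
  rw [independentEdgeProb, Finset.sum_filter, Finset.mul_sum]
  refine Finset.sum_le_sum fun G _ => ?_
  have hw := independentEdgeWeight_nonneg hq G
  split_ifs with hD
  · rw [← mul_assoc, ← Real.exp_add]
    refine le_mul_of_one_le_left hw (Real.one_le_exp ?_)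
    linarith [mul_le_mul_of_nonneg_left hD.le ht]
  · positivity

theorem independentEdgeProb_lt_degree_le (hq : ∀ e, q e ∈ Set.Icc 0 1) {t : ℝ} (ht : 0 ≤ t)
    (v : V) (D : ℝ) :
    independentEdgeProb q (fun G => D < G.degree v) ≤
      Real.exp ((Real.exp t - 1) * ∑ e ∈ (⊤ : SimpleGraph V).incidenceFinset v, q e - t * D) := by
  have ht' : 0 ≤ Real.exp t - 1 := sub_nonneg.2 (Real.one_le_exp ht)
  calc independentEdgeProb q (fun G => D < G.degree v)
      ≤ Real.exp (-(t * D)) *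
          ∏ e ∈ (⊤ : SimpleGraph V).incidenceFinset v, (1 + (Real.exp t - 1) * q e) := by
        rw [← sum_exp_mul_degree_mul_independentEdgeWeight]
        exact independentEdgeProb_lt_le_exp_mul_sum hq ht _ D
    _ ≤ Real.exp (-(t * D)) *
          Real.exp (∑ e ∈ (⊤ : SimpleGraph V).incidenceFinset v, (Real.exp t - 1) * q e) := by
        gcongr
        exact Real.prod_one_add_le_exp_sum _ fun e => mul_nonneg ht' (hq e).1
    _ = _ := by
        rw [← Real.exp_add, ← Finset.mul_sum, neg_add_eq_sub]

theorem sum_incidenceFinset_top {M : Type*} [AddCommMonoid M] (f : Sym2 V → M) (v : V) :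
    ∑ e ∈ (⊤ : SimpleGraph V).incidenceFinset v, f e = ∑ w ∈ Finset.univ.erase v, f s(v, w) := by
  have himage : (⊤ : SimpleGraph V).incidenceFinset v =
      (Finset.univ.erase v).image fun w => s(v, w) := by
    ext ⟨a, b⟩
    simp only [SimpleGraph.mem_incidenceFinset, SimpleGraph.mk'_mem_incidenceSet_iff]
    aesop
  rw [himage, Finset.sum_image fun _ _ _ _ h => Sym2.congr_right.1 h]

end IndependentEdges

theorem prod_prod_ite_lt_eq_prod_edgeFinset_top {V M : Type*} [Fintype V] [LinearOrder V]
    [CommMonoid M] (f : V → V → M) :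
    ∏ i, ∏ j, (if i < j then f i j else 1) =
      ∏ e ∈ (⊤ : SimpleGraph V).edgeFinset, f e.inf e.sup := by
  rw [← Fintype.prod_prod_type', ← Finset.prod_filter]
  refine Finset.prod_bij' (fun x _ => s(x.1, x.2)) (fun e _ => (e.inf, e.sup)) ?_ ?_ ?_ ?_ ?_
  · simp +contextual [LT.lt.ne]
  · rintro ⟨a, b⟩
    simp +contextual [eq_comm]
  · simp +contextual [LT.lt.le]
  · exact fun e _ => Sym2.sortEquiv.symm_apply_apply e
  · simp +contextual [LT.lt.le]

/-- The edge probabilities of `graphWeight p N`, as a function of the unordered pair. As in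
`graphWeight`, the smaller endpoint is the first argument of `p`. -/
def edgeProb (p : ℕ → ℕ → ℝ) (N : ℕ) (e : Sym2 (Fin N)) : ℝ :=
  p ((e.inf : ℕ) + 1) ((e.sup : ℕ) + 1)

theorem edgeProb_mk {p : ℕ → ℕ → ℝ} (hs : ∀ i j, p i j = p j i) {N : ℕ} (v w : Fin N) :
    edgeProb p N s(v, w) = p ((v : ℕ) + 1) ((w : ℕ) + 1) := by
  rcases le_total v w with h | h <;> simp [edgeProb, h, hs ((w : ℕ) + 1)]

theorem graphWeight_eq_independentEdgeWeight (p : ℕ → ℕ → ℝ) (N : ℕ) (G : SimpleGraph (Fin N)) :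
    graphWeight p N G = independentEdgeWeight (edgeProb p N) G := by
  rw [graphWeight, independentEdgeWeight, prod_prod_ite_lt_eq_prod_edgeFinset_top fun i j =>
    if G.Adj i j then p ((i : ℕ) + 1) ((j : ℕ) + 1) else 1 - p ((i : ℕ) + 1) ((j : ℕ) + 1)]
  refine Finset.prod_congr rfl fun e _ => ?_
  have hadj : G.Adj e.inf e.sup ↔ e ∈ G.edgeSet := by
    rw [← SimpleGraph.mem_edgeSet]
    exact iff_of_eq (congrArg (· ∈ G.edgeSet) (Sym2.sortEquiv.symm_apply_apply e))
  simp only [hadj, edgeProb]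

theorem graphProb_eq_independentEdgeProb (p : ℕ → ℕ → ℝ) (N : ℕ)
    (A : SimpleGraph (Fin N) → Prop) :
    graphProb p N A = independentEdgeProb (edgeProb p N) A := by
  simp only [graphProb, independentEdgeProb, graphWeight_eq_independentEdgeWeight,
    Finset.sum_filter]

section GraphProb

variable {p : ℕ → ℕ → ℝ} {N : ℕ}

theorem graphProb_le_one (hp : ∀ i j, p i j ∈ Set.Icc 0 1) (A : SimpleGraph (Fin N) → Prop) :
    graphProb p N A ≤ 1 :=
  (graphProb_eq_independentEdgeProb p N A).trans_le
    (independentEdgeProb_le_one (fun _ => hp _ _) A)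

theorem one_sub_card_mul_exp_le_graphProb_degree_le (hp : ∀ i j, p i j ∈ Set.Icc 0 1)
    (hs : ∀ i j, p i j = p j i) {t : ℝ} (ht : 0 ≤ t) (S : Finset (Fin N)) {M : ℝ}
    (hM : ∀ v ∈ S, ∑ w : Fin N, p ((v : ℕ) + 1) ((w : ℕ) + 1) ≤ M) (D : ℝ) :
    1 - S.card * Real.exp ((Real.exp t - 1) * M - t * D) ≤
      graphProb p N (fun G => ∀ v ∈ S, (G.degree v : ℝ) ≤ D) := by
  have hq : ∀ e, edgeProb p N e ∈ Set.Icc 0 1 := fun _ => hp _ _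
  have hmean : ∀ v ∈ S,
      ∑ e ∈ (⊤ : SimpleGraph (Fin N)).incidenceFinset v, edgeProb p N e ≤ M := fun v hv => by
    simp only [sum_incidenceFinset_top, edgeProb_mk hs]
    exact (Finset.sum_le_univ_sum_of_nonneg fun w => (hp _ _).1).trans (hM v hv)
  have htail : ∀ v ∈ S, independentEdgeProb (edgeProb p N) (fun G => ¬ (G.degree v : ℝ) ≤ D) ≤
      Real.exp ((Real.exp t - 1) * M - t * D) := by
    intro v hv
    simp only [not_le]
    refine (independentEdgeProb_lt_degree_le hq ht v D).trans ?_
    gcongr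
    · exact sub_nonneg.2 (Real.one_le_exp ht)
    · exact hmean v hv
  rw [graphProb_eq_independentEdgeProb]
  refine (sub_le_sub_left ?_ 1).trans (one_sub_sum_independentEdgeProb_not_le hq S _)
  exact (Finset.sum_le_card_nsmul S _ _ htail).trans_eq (nsmul_eq_mul _ _)

end GraphProb

theorem mul_rpow_sub_one_le_rpow_sub {s x : ℝ} (hs : s ∈ Set.Icc 0 1) (hx : 1 ≤ x) :
    s * x ^ (s - 1) ≤ x ^ s - (x - 1) ^ s := by
  have hx0 : 0 < x := by linarith
  have hbernoulli : (1 + -x⁻¹) ^ s ≤ 1 + s * -x⁻¹ :=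
    rpow_one_add_le_one_add_mul_self (neg_le_neg (inv_le_one_of_one_le₀ hx)) hs.1 hs.2
  have hsplit : (x - 1) ^ s = x ^ s * (1 + -x⁻¹) ^ s := by
    rw [← Real.mul_rpow hx0.le (by linarith [inv_le_one_of_one_le₀ hx]), mul_add, mul_neg,
      mul_inv_cancel₀ hx0.ne', mul_one, sub_eq_add_neg]
  have hpow : x ^ (s - 1) = x ^ s * x⁻¹ := by rw [Real.rpow_sub_one hx0.ne', div_eq_mul_inv]
  rw [hsplit, hpow]
  linarith [mul_le_mul_of_nonneg_left hbernoulli (Real.rpow_nonneg hx0.le s)]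

theorem sum_range_succ_rpow_sub_one_le {s : ℝ} (hs : s ∈ Set.Ioc 0 1) (N : ℕ) :
    ∑ j ∈ Finset.range N, ((j : ℝ) + 1) ^ (s - 1) ≤ (N : ℝ) ^ s / s := by
  rw [le_div_iff₀' hs.1, Finset.mul_sum]
  calc ∑ j ∈ Finset.range N, s * ((j : ℝ) + 1) ^ (s - 1)
      ≤ ∑ j ∈ Finset.range N, (((j + 1 : ℕ) : ℝ) ^ s - (j : ℝ) ^ s) := by
        refine Finset.sum_le_sum fun j _ => ?_
        simpa using mul_rpow_sub_one_le_rpow_sub (Set.Ioc_subset_Icc_self hs)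
          (le_add_of_nonneg_left j.cast_nonneg : (1 : ℝ) ≤ j + 1)
    _ = (N : ℝ) ^ s := by
        rw [Finset.sum_range_sub fun j : ℕ => (j : ℝ) ^ s]
        simp [Real.zero_rpow hs.1.ne']

theorem div_rpow_le_of_mul_rpow_neg_le {α γ ε N L x : ℝ} (hγ : 0 ≤ γ) (hε : 0 < ε) (hN : 0 < N)
    (hL : 0 < L) (hx : ε * N * L ^ (-α) ≤ x) :
    (N / x) ^ γ ≤ ε ^ (-γ) * L ^ (α * γ) := by
  have hx0 : 0 < x := lt_of_lt_of_le (by positivity) hx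
  have hratio : N / x ≤ ε⁻¹ * L ^ α := by
    rw [Real.rpow_neg hL.le] at hx
    rw [div_le_iff₀ hx0]
    calc N = ε⁻¹ * L ^ α * (ε * N * (L ^ α)⁻¹) := by field_simp
      _ ≤ ε⁻¹ * L ^ α * x := by gcongr
  calc (N / x) ^ γ ≤ (ε⁻¹ * L ^ α) ^ γ := by gcongr
    _ = ε ^ (-γ) * L ^ (α * γ) := by
      rw [Real.mul_rpow (by positivity) (by positivity), Real.inv_rpow hε.le, Real.rpow_neg hε.le,
        ← Real.rpow_mul hL.le]

section SNR

variable {β γ : ℝ}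

theorem snrEdgeProb_mem_Icc (hβ : 0 ≤ β) (γ : ℝ) (N i j : ℕ) :
    snrEdgeProb β γ N i j ∈ Set.Icc 0 1 := by
  refine ⟨sub_nonneg.2 (Real.exp_le_one_iff.2 (neg_nonpos.2 ?_)), sub_le_self _ (Real.exp_nonneg _)⟩
  positivity

theorem snrEdgeProb_comm (β γ : ℝ) (N i j : ℕ) :
    snrEdgeProb β γ N i j = snrEdgeProb β γ N j i := by
  rw [snrEdgeProb, mul_right_comm, snrEdgeProb]

theorem snrEdgeProb_le (β γ : ℝ) (N i j : ℕ) :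
    snrEdgeProb β γ N i j ≤ β * (N : ℝ) ^ (2 * γ - 1) * (i : ℝ) ^ (-γ) * (j : ℝ) ^ (-γ) := by
  rw [snrEdgeProb, sub_le_comm]
  exact Real.one_sub_le_exp_neg _

theorem sum_snrEdgeProb_le (hβ : 0 ≤ β) (hγ : γ ∈ Set.Ico 0 1) {N : ℕ} (v : Fin N) :
    ∑ w : Fin N, snrEdgeProb β γ N ((v : ℕ) + 1) ((w : ℕ) + 1) ≤
      β / (1 - γ) * ((N : ℝ) / ((v : ℕ) + 1)) ^ γ := by
  have hN : (0 : ℝ) < N := Nat.cast_pos.2 v.pos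
  have hpow : (N : ℝ) ^ (2 * γ - 1) * (N : ℝ) ^ (1 - γ) = (N : ℝ) ^ γ := by
    rw [← Real.rpow_add hN]
    ring_nf
  have hsum : ∑ j ∈ Finset.range N, ((j : ℝ) + 1) ^ (-γ) ≤ (N : ℝ) ^ (1 - γ) / (1 - γ) := by
    simpa using sum_range_succ_rpow_sub_one_le (s := 1 - γ) ⟨sub_pos.2 hγ.2, by linarith [hγ.1]⟩ N
  calc ∑ w : Fin N, snrEdgeProb β γ N ((v : ℕ) + 1) ((w : ℕ) + 1)
      ≤ ∑ w : Fin N, β * (N : ℝ) ^ (2 * γ - 1) * ((v : ℕ) + 1 : ℝ) ^ (-γ) *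
          ((w : ℕ) + 1 : ℝ) ^ (-γ) := by
        refine Finset.sum_le_sum fun w _ => ?_
        exact_mod_cast snrEdgeProb_le β γ N (v + 1) (w + 1)
    _ = β * (N : ℝ) ^ (2 * γ - 1) * ((v : ℕ) + 1 : ℝ) ^ (-γ) *
          ∑ j ∈ Finset.range N, ((j : ℝ) + 1) ^ (-γ) := by
        rw [← Finset.mul_sum, Finset.sum_range fun j : ℕ => ((j : ℝ) + 1) ^ (-γ)]
    _ ≤ β * (N : ℝ) ^ (2 * γ - 1) * ((v : ℕ) + 1 : ℝ) ^ (-γ) *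
          ((N : ℝ) ^ (1 - γ) / (1 - γ)) := by gcongr
    _ = β / (1 - γ) * ((N : ℝ) / ((v : ℕ) + 1)) ^ γ := by
        rw [Real.div_rpow hN.le (by positivity), ← hpow, Real.rpow_neg (by positivity)]
        ring

theorem one_sub_inv_le_snrProb_degree_le {ε α : ℝ} (hβ : 0 ≤ β) (hγ : γ ∈ Set.Ico 0 1)
    (hε : 0 < ε) (hαγ : 1 ≤ α * γ) {N : ℕ} (hN : 3 ≤ N) :
    1 - (N : ℝ)⁻¹ ≤ snrProb β γ N (fun G =>
      ∀ v : Fin N, ε * (N : ℝ) * Real.log N ^ (-α) ≤ ((v : ℕ) + 1 : ℝ) →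
        (G.degree v : ℝ) ≤
          ((Real.exp 1 - 1) * (β / (1 - γ) * ε ^ (-γ)) + 2) * Real.log N ^ (α * γ)) := by
  set K := β / (1 - γ) * ε ^ (-γ)
  set L := Real.log N
  set S : Finset (Fin N) := {v | ε * (N : ℝ) * L ^ (-α) ≤ ((v : ℕ) + 1 : ℝ)}
  have hN0 : (0 : ℝ) < N := by positivity
  have hL : 1 ≤ L := by
    rw [Real.le_log_iff_exp_le hN0]
    exact Real.exp_one_lt_three.le.trans (mod_cast hN)
  have hmean : ∀ v ∈ S,
      ∑ w : Fin N, snrEdgeProb β γ N ((v : ℕ) + 1) ((w : ℕ) + 1) ≤ K * L ^ (α * γ) := by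
    intro v hv
    refine (sum_snrEdgeProb_le hβ hγ v).trans ?_
    rw [mul_assoc]
    have h1γ : 0 < 1 - γ := sub_pos.2 hγ.2
    gcongr
    exact div_rpow_le_of_mul_rpow_neg_le hγ.1 hε hN0 (by positivity) (Finset.mem_filter.1 hv).2
  have hexp : Real.exp ((Real.exp 1 - 1) * (K * L ^ (α * γ)) -
      ((Real.exp 1 - 1) * K + 2) * L ^ (α * γ)) ≤ (N : ℝ)⁻¹ * (N : ℝ)⁻¹ := by
    have hpow : L ≤ L ^ (α * γ) := Real.self_le_rpow_of_one_le hL hαγ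
    rw [← Real.exp_log hN0, ← Real.exp_neg, ← Real.exp_add, Real.exp_le_exp]
    linarith
  have hunion : S.card * Real.exp ((Real.exp 1 - 1) * (K * L ^ (α * γ)) -
      ((Real.exp 1 - 1) * K + 2) * L ^ (α * γ)) ≤ (N : ℝ)⁻¹ :=
    calc _ ≤ (N : ℝ) * ((N : ℝ)⁻¹ * (N : ℝ)⁻¹) := by
          gcongr
          exact card_finset_fin_le S
      _ = (N : ℝ)⁻¹ := mul_inv_cancel_left₀ hN0.ne' _
  refine (sub_le_sub_left hunion 1).trans ?_
  simpa [snrProb, S] using one_sub_card_mul_exp_le_graphProb_degree_le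
    (snrEdgeProb_mem_Icc hβ γ N) (snrEdgeProb_comm β γ N) zero_le_one S hmean
    (((Real.exp 1 - 1) * K + 2) * L ^ (α * γ))

end SNR

/-- For `β > 0`, `γ ∈ (0,1)`, `ε > 0` and `α ≥ 1/γ`, there is `C > 0` such
that with probability tending to `1` as `N → ∞`, every vertex `v` of `G_N` with (1-based)
index at least `εN log^{−α} N` has degree at most `C log^{αγ} N`. -/
theorem snr_low_weight_degree_bound
    (β γ ε α : ℝ) (hβ : 0 < β) (hγ : γ ∈ Set.Ioo (0 : ℝ) 1) (hε : 0 < ε)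
    (hα : 1 / γ ≤ α) :
    ∃ C > (0 : ℝ),
      Tendsto
        (fun N : ℕ =>
          snrProb β γ N (fun G =>
            ∀ v : Fin N, ε * (N : ℝ) * Real.log N ^ (-α) ≤ ((v : ℕ) + 1 : ℝ) →
              (G.degree v : ℝ) ≤ C * Real.log N ^ (α * γ)))
        atTop (nhds 1) := by
  have hαγ : 1 ≤ α * γ := (div_le_iff₀ hγ.1).1 hα
  have hC : 0 < (Real.exp 1 - 1) * (β / (1 - γ) * ε ^ (-γ)) + 2 := by
    have h1γ : 0 < 1 - γ := sub_pos.2 hγ.2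
    have he : 0 ≤ Real.exp 1 - 1 := sub_nonneg.2 (Real.one_le_exp zero_le_one)
    positivity
  refine ⟨_, hC, ?_⟩
  have hlim : Tendsto (fun N : ℕ => 1 - (N : ℝ)⁻¹) atTop (nhds 1) := by
    simpa using tendsto_inv_atTop_nhds_zero_nat.const_sub (1 : ℝ)
  refine tendsto_of_tendsto_of_tendsto_of_le_of_le' hlim tendsto_const_nhds ?_
    (Eventually.of_forall fun N => graphProb_le_one (snrEdgeProb_mem_Icc hβ.le γ N) _)
  filter_upwards [eventually_ge_atTop 3] with N hN
  exact one_sub_inv_le_snrProb_degree_le hβ.le (Set.Ioo_subset_Ico_self hγ) hε hαγ hN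
end
end
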